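/- For the map f, for every p̄ ∈ S the basin of attraction 𝒢(ν_p̄) = {x ∈ [0,1] : e_n(x) converges in the weak* topology to ν_p̄} has Hausdorff dimension 1. -/

import Mathlib

open MeasureTheory Filter Topology Set
open scoped ENNReal

noncomputable section

/-- The interval map `f` of Serre–Yang type: `f(x) = x + 18x³` on `[0,1/3]`,
`f(x) = x + 72(x − 1/2)³` on `(1/3,2/3)` and `f(x) = x + 18(x − 1)³` on `[2/3,1]`. -/
def theMap : ℝ → ℝ := fun x =>
  if x ≤ 1 / 3 then x + 18 * x ^ 3
  else if x < 2 / 3 then x + 72 * (x - 1 / 2) ^ 3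
  else x + 18 * (x - 1) ^ 3

/-- The three neutral fixed points `0`, `1/2`, `1`. -/
def theFixedPts : Fin 3 → ℝ := ![0, 1 / 2, 1]

/-- The `n`-th empirical measure `e_n(x) = (1/n) ∑_{k<n} δ_{f^k x}`. -/
def empMeasure (f : ℝ → ℝ) (n : ℕ) (x : ℝ) : Measure ℝ :=
  (n : ℝ≥0∞)⁻¹ • ∑ k ∈ Finset.range n, Measure.dirac (f^[k] x)

/-- Weak* convergence of a sequence of measures, tested against bounded continuous functions. -/
def WeakTendsto (μ : ℕ → Measure ℝ) (ν : Measure ℝ) : Prop :=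
  ∀ g : BoundedContinuousFunction ℝ ℝ,
    Tendsto (fun n => ∫ y, g y ∂(μ n)) atTop (𝓝 (∫ y, g y ∂ν))

/-- `V(x)`: the set of weak* limit points of `(e_n(x))_{n ≥ 1}`. -/
def Vset (f : ℝ → ℝ) (x : ℝ) : Set (Measure ℝ) :=
  {ν | ∃ φ : ℕ → ℕ, StrictMono φ ∧ WeakTendsto (fun k => empMeasure f (φ k + 1) x) ν}

/-- The simplex `S = {p̄ ∈ [0,1]³ : p₁ + p₂ + p₃ = 1}`. -/
def simplexS : Set (Fin 3 → ℝ) :=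
  {p | (∀ i, p i ∈ Set.Icc (0:ℝ) 1) ∧ ∑ i, p i = 1}

/-- The measure `ν_p̄ = p₁ δ_0 + p₂ δ_{1/2} + p₃ δ_1`. -/
def nuMeasure (p : Fin 3 → ℝ) : Measure ℝ :=
  ∑ j, ENNReal.ofReal (p j) • Measure.dirac (theFixedPts j)

/-!
Points of the basin are built as backward orbits `x i = ψ_i (x (i + 1))`, where each `ψ_i` is a
composition of inverse branches: first a word of a finite prefix code, chosen freely, then an
excursion that spends the proportions `p̄` of its time near the three neutral fixed points.

The code provides the dimension. A long stay at a neutral fixed point contracts lengths only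
polynomially, and the distortion of an inverse branch is controlled by a weight that blows up at
the fixed points only; so inverse branches ending with a change of branch have uniformly bounded
distortion, and the corresponding cylinders cover the interval up to arbitrarily small length. For
`s < 1` this yields arbitrarily many code words contracting by at least a common ratio `m`, in
numbers exceeding any multiple of `m⁻ˢ`.

The excursions provide the convergence. Their lengths are about `2 ^ v₂ (i + 1)`, whose averages
are unbounded, so that the time spent in code words is negligible. By the polynomial contraction
each of them costs only a factor `η ^ v₂ (i + 1)`, and the averages of the exponents are bounded: an
excursion costs a bounded factor on average, which the number of code words compensates.
-/

/-! ### Slopes of increasing functions -/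

/-- The difference quotients of `E` over pairs of points of `s` lie in `[a, b]`; stated without
division, so that no case distinction on coincident points is needed. -/
def SlopesIn (E : ℝ → ℝ) (s : Set ℝ) (a b : ℝ) : Prop :=
  ∀ ⦃x⦄, x ∈ s → ∀ ⦃y⦄, y ∈ s → x ≤ y → E y - E x ∈ Icc (a * (y - x)) (b * (y - x))

namespace SlopesIn

variable {E F : ℝ → ℝ} {s t : Set ℝ} {a a' b b' c d : ℝ}

lemma id (s : Set ℝ) : SlopesIn id s 1 1 := fun x _ y _ _ => by simp

lemma mono (h : SlopesIn E t a b) (hst : s ⊆ t) (ha : a' ≤ a) (hb : b ≤ b') :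
    SlopesIn E s a' b' := fun _ hx _ hy hxy =>
  ⟨(mul_le_mul_of_nonneg_right ha (sub_nonneg.2 hxy)).trans (h (hst hx) (hst hy) hxy).1,
    (h (hst hx) (hst hy) hxy).2.trans (mul_le_mul_of_nonneg_right hb (sub_nonneg.2 hxy))⟩

lemma monotoneOn (h : SlopesIn E s a b) (ha : 0 ≤ a) : MonotoneOn E s := fun _ hx _ hy hxy =>
  sub_nonneg.1 ((mul_nonneg ha (sub_nonneg.2 hxy)).trans (h hx hy hxy).1)

lemma comp (hE : SlopesIn E t a b) (hF : SlopesIn F s c d) (hst : MapsTo F s t)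
    (ha : 0 ≤ a) (hb : 0 ≤ b) (hc : 0 ≤ c) : SlopesIn (fun x => E (F x)) s (a * c) (b * d) := by
  intro x hx y hy hxy
  obtain ⟨hE₁, hE₂⟩ := hE (hst hx) (hst hy) (hF.monotoneOn hc hx hy hxy)
  obtain ⟨hF₁, hF₂⟩ := hF hx hy hxy
  rw [mem_Icc, mul_assoc, mul_assoc]
  exact ⟨(mul_le_mul_of_nonneg_left hF₁ ha).trans hE₁, hE₂.trans (mul_le_mul_of_nonneg_left hF₂ hb)⟩

lemma mul_abs_sub_le (h : SlopesIn E s a b) {x y : ℝ} (hx : x ∈ s) (hy : y ∈ s) :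
    a * |x - y| ≤ |E x - E y| := by
  rcases le_total x y with hxy | hxy
  · rw [abs_sub_comm, abs_sub_comm (E x), abs_of_nonneg (sub_nonneg.2 hxy)]
    exact (h hx hy hxy).1.trans (le_abs_self _)
  · rw [abs_of_nonneg (sub_nonneg.2 hxy)]
    exact (h hy hx hxy).1.trans (le_abs_self _)

lemma of_deriv (hE : Differentiable ℝ E) (hs : Convex ℝ s)
    (h : ∀ x ∈ s, deriv E x ∈ Icc a b) : SlopesIn E s a b := fun x hx y hy hxy =>
  ⟨hs.mul_sub_le_image_sub_of_le_deriv hE.continuous.continuousOn hE.differentiableOn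
      (fun z hz => (h z (interior_subset hz)).1) x hx y hy hxy,
    hs.image_sub_le_mul_sub_of_deriv_le hE.continuous.continuousOn hE.differentiableOn
      (fun z hz => (h z (interior_subset hz)).2) x hx y hy hxy⟩

/-- Slopes do not see a simultaneous affine change of coordinates in source and target. -/
lemma affine_conj (h : SlopesIn E t a b) {p r : ℝ} (hr : 0 < r)
    (hst : MapsTo (fun x => (x - p) / r) s t) :
    SlopesIn (fun x => p + r * E ((x - p) / r)) s a b := by
  intro x hx y hy hxy
  obtain ⟨h₁, h₂⟩ := h (hst hx) (hst hy) (by dsimp only; gcongr)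
  have hdiff : y - x = r * ((y - p) / r - (x - p) / r) := by field_simp; ring
  rw [mem_Icc, hdiff, add_sub_add_left_eq_sub, ← mul_sub, mul_left_comm a, mul_left_comm b]
  exact ⟨by gcongr, by gcongr⟩

end SlopesIn

/-! ### Compositions along words -/

section WordMap

variable {ι α : Type*} {g : ι → α → α} {s : Set α}

/-- The composition `g w₁ ∘ ⋯ ∘ g wₙ` attached to a word `w = [w₁, …, wₙ]`: for inverse branches
`g j` of a map, its image is the cylinder of points with itinerary `w`. -/
def wordMap (g : ι → α → α) (w : List ι) (x : α) : α := w.foldr g x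

@[simp] lemma wordMap_nil (x : α) : wordMap g [] x = x := rfl

@[simp] lemma wordMap_cons (j : ι) (w : List ι) (x : α) :
    wordMap g (j :: w) x = g j (wordMap g w x) := rfl

lemma wordMap_append (v w : List ι) (x : α) :
    wordMap g (v ++ w) x = wordMap g v (wordMap g w x) := List.foldr_append

lemma wordMap_replicate (n : ℕ) (j : ι) (x : α) :
    wordMap g (List.replicate n j) x = (g j)^[n] x := by
  induction n with
  | zero => rfl
  | succ n ih => rw [List.replicate_succ, wordMap_cons, ih, Function.iterate_succ_apply']

lemma mapsTo_wordMap (hs : ∀ j, MapsTo (g j) s s) (w : List ι) : MapsTo (wordMap g w) s s := by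
  induction w with
  | nil => exact mapsTo_id s
  | cons j w ih => exact (hs j).comp ih

lemma continuous_wordMap [TopologicalSpace α] (hg : ∀ j, Continuous (g j)) (w : List ι) :
    Continuous (wordMap g w) := by
  induction w with
  | nil => exact continuous_id
  | cons j w ih => exact (hg j).comp ih

lemma strictMono_wordMap [Preorder α] (hg : ∀ j, StrictMono (g j)) (w : List ι) :
    StrictMono (wordMap g w) := by
  induction w with
  | nil => exact strictMono_id
  | cons j w ih => exact (hg j).comp ih

lemma iterate_wordMap {f : α → α} (hs : ∀ j, MapsTo (g j) s s)
    (hf : ∀ j, LeftInvOn f (g j) s) {x : α} (hx : x ∈ s) (w : List ι) :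
    f^[w.length] (wordMap g w x) = x := by
  induction w with
  | nil => rfl
  | cons j w ih =>
    rw [List.length_cons, Function.iterate_succ_apply, wordMap_cons,
      hf j (mapsTo_wordMap hs w hx), ih]

lemma birkhoffSum_wordMap_append {f : α → α} (hs : ∀ j, MapsTo (g j) s s)
    (hf : ∀ j, LeftInvOn f (g j) s) (h : α → ℝ) {x : α} (hx : x ∈ s) (v w : List ι) :
    birkhoffSum f h (v ++ w).length (wordMap g (v ++ w) x) =
      birkhoffSum f h v.length (wordMap g v (wordMap g w x)) +
        birkhoffSum f h w.length (wordMap g w x) := by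
  rw [List.length_append, birkhoffSum_add, wordMap_append,
    iterate_wordMap hs hf (mapsTo_wordMap hs w hx)]

end WordMap

section BackwardOrbit

/-- The sequences that satisfy the first `n` relations form a decreasing family of nonempty compact
sets. -/
lemma exists_forall_eq_apply_succ {X : Type*} [TopologicalSpace X] [T2Space X] {K : Set X}
    (hK : IsCompact K) (hne : K.Nonempty) {T : ℕ → X → X} (hT : ∀ i, Continuous (T i))
    (hmaps : ∀ i, MapsTo (T i) K K) :
    ∃ x : ℕ → X, ∀ i, x i ∈ K ∧ x i = T i (x (i + 1)) := by
  let C : ℕ → Set (ℕ → X) := fun n => {x | (∀ i, x i ∈ K) ∧ ∀ i < n, x i = T i (x (i + 1))}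
  have hpi : IsCompact {x : ℕ → X | ∀ i, x i ∈ K} := isCompact_pi_infinite fun _ => hK
  have hclosed (n) : IsClosed (C n) := by
    have hrel (i : ℕ) : IsClosed {x : ℕ → X | x i = T i (x (i + 1))} :=
      isClosed_eq (continuous_apply i) ((hT i).comp (continuous_apply (i + 1)))
    simpa only [C, ofPred_and, ofPred_forall] using
      hpi.isClosed.inter (isClosed_iInter fun i => isClosed_iInter fun _ : i < n => hrel i)
  have hnonempty (n) : (C n).Nonempty := by
    obtain ⟨z, hz⟩ := hne
    refine ⟨fun i => wordMap T (List.range' i (n - i)) z,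
      fun i => mapsTo_wordMap hmaps _ hz, fun i hi => ?_⟩
    dsimp only
    rw [show n - i = n - (i + 1) + 1 by lia, List.range'_succ, wordMap_cons]
  obtain ⟨x, hx⟩ := IsCompact.nonempty_iInter_of_sequence_nonempty_isCompact_isClosed C
    (fun n x hx => ⟨hx.1, fun i hi => hx.2 i (hi.trans n.lt_succ_self)⟩) hnonempty
    (hpi.of_isClosed_subset (hclosed 0) fun x hx => hx.1) hclosed
  rw [mem_iInter] at hx
  exact ⟨x, fun i => ⟨(hx 0).1 i, (hx (i + 1)).2 i i.lt_succ_self⟩⟩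

end BackwardOrbit

/-! ### Birkhoff averages along an orbit cut into blocks -/

section Blocks

variable {α : Type*} {f : α → α} {h : α → ℝ} {M : ℝ}

lemma abs_birkhoffSum_le (hM : ∀ y, |h y| ≤ M) (n : ℕ) (x : α) :
    |birkhoffSum f h n x| ≤ n * M :=
  (Finset.abs_sum_le_sum_abs _ _).trans <| (Finset.sum_le_sum fun _ _ => hM _).trans_eq <| by
    rw [Finset.sum_const, Finset.card_range, nsmul_eq_mul]

lemma exists_mem_Ico_of_tendsto_atTop {T : ℕ → ℕ} (hT : Tendsto T atTop atTop) {i n : ℕ}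
    (hi : T i ≤ n) : ∃ j ≥ i, n ∈ Ico (T j) (T (j + 1)) := by
  obtain ⟨m, him, hm⟩ := (hT.eventually_gt_atTop n).frequently.forall_exists_of_atTop i
  induction m, him using Nat.le_induction with
  | base => exact absurd hm hi.not_gt
  | succ m him ih => exact (le_or_gt (T m) n).elim (fun hle => ⟨m, him, hle, hm⟩) ih

lemma isLittleO_birkhoffSum_of_subsequence {x : α} {T : ℕ → ℕ} (hM : ∀ y, |h y| ≤ M)
    (hT : Tendsto T atTop atTop)
    (hgap : (fun i => (T (i + 1) : ℝ) - T i) =o[atTop] fun i => (T i : ℝ))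
    (hsum : (fun i => birkhoffSum f h (T i) x) =o[atTop] fun i => (T i : ℝ)) :
    (fun n => birkhoffSum f h n x) =o[atTop] fun n => (n : ℝ) := by
  have hM₀ : 0 ≤ M := (abs_nonneg _).trans (hM x)
  refine Asymptotics.isLittleO_iff.2 fun ε hε => ?_
  obtain ⟨i, hi⟩ := eventually_atTop.1 <|
    (hgap.def (div_pos hε (by positivity : 0 < 2 * (M + 1)))).and (hsum.def (half_pos hε))
  filter_upwards [eventually_ge_atTop (T i)] with n hn
  obtain ⟨j, hj, hTj, hTj'⟩ := exists_mem_Ico_of_tendsto_atTop hT hn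
  obtain ⟨k, rfl⟩ := Nat.exists_eq_add_of_le hTj
  obtain ⟨hgap_j, hsum_j⟩ := hi j hj
  simp only [Real.norm_eq_abs, Nat.abs_cast] at hgap_j hsum_j ⊢
  have hk : (k : ℝ) ≤ T (j + 1) - T j := by
    rw [le_sub_iff_add_le']
    exact_mod_cast hTj'.le
  have hεM : ε / (2 * (M + 1)) * M ≤ ε / 2 := by
    rw [div_mul_eq_mul_div, div_le_div_iff₀ (by positivity) two_pos]
    nlinarith
  rw [birkhoffSum_add]
  calc |birkhoffSum f h (T j) x + birkhoffSum f h k (f^[T j] x)|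
      ≤ ε / 2 * T j + k * M :=
        (abs_add_le _ _).trans (add_le_add hsum_j (abs_birkhoffSum_le hM _ _))
    _ ≤ ε / 2 * T j + ε / (2 * (M + 1)) * T j * M := by
        gcongr
        exact hk.trans ((le_abs_self _).trans hgap_j)
    _ = ε / 2 * T j + ε / (2 * (M + 1)) * M * T j := by ring
    _ ≤ ε / 2 * T j + ε / 2 * T j := by gcongr
    _ ≤ ε * (T j + k : ℕ) := by
        push_cast
        nlinarith [mul_nonneg hε.le (Nat.cast_nonneg (α := ℝ) k)]

variable {x : ℕ → α} {len : ℕ → ℕ}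

lemma iterate_sum_range_blocks (hx : ∀ i, f^[len i] (x i) = x (i + 1)) (i : ℕ) :
    f^[∑ k ∈ Finset.range i, len k] (x 0) = x i := by
  induction i with
  | zero => rfl
  | succ i ih => rw [Finset.sum_range_succ, add_comm, Function.iterate_add_apply, ih, hx]

lemma birkhoffSum_sum_range_blocks (hx : ∀ i, f^[len i] (x i) = x (i + 1)) (i : ℕ) :
    birkhoffSum f h (∑ k ∈ Finset.range i, len k) (x 0) =
      ∑ k ∈ Finset.range i, birkhoffSum f h (len k) (x k) := by
  induction i with
  | zero => rfl
  | succ i ih =>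
    rw [Finset.sum_range_succ, birkhoffSum_add, iterate_sum_range_blocks hx, ih,
      Finset.sum_range_succ]

/-- The additive error `C` per block is negligible because `i` blocks have total length `≫ i`. -/
theorem isLittleO_birkhoffSum_of_blocks (hM : ∀ y, |h y| ≤ M)
    (hx : ∀ i, f^[len i] (x i) = x (i + 1))
    (hblock : ∀ ε > 0, ∃ C, ∀ i, |birkhoffSum f h (len i) (x i)| ≤ ε * len i + C)
    (hlen : (fun i => (len i : ℝ)) =o[atTop] fun i => ((∑ k ∈ Finset.range i, len k : ℕ) : ℝ))
    (hcount : (fun i : ℕ => (i : ℝ)) =o[atTop]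
      fun i => ((∑ k ∈ Finset.range i, len k : ℕ) : ℝ)) :
    (fun n => birkhoffSum f h n (x 0)) =o[atTop] fun n => (n : ℝ) := by
  refine isLittleO_birkhoffSum_of_subsequence hM (T := fun i => ∑ k ∈ Finset.range i, len k)
    ?_ ?_ ?_
  · refine (tendsto_natCast_atTop_iff (R := ℝ)).1 (tendsto_atTop_mono' atTop ?_
      tendsto_natCast_atTop_atTop)
    filter_upwards [hcount.def one_pos] with i hi
    simpa only [Real.norm_eq_abs, Nat.abs_cast, one_mul] using hi
  · simpa only [Finset.sum_range_succ, Nat.cast_add, add_sub_cancel_left] using hlen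
  · refine Asymptotics.isLittleO_iff.2 fun ε hε => ?_
    obtain ⟨C, hC⟩ := hblock (ε / 2) (half_pos hε)
    filter_upwards [(hcount.const_mul_left C).def (half_pos hε)] with i hi
    simp only [Real.norm_eq_abs, Nat.abs_cast] at hi ⊢
    rw [birkhoffSum_sum_range_blocks hx]
    calc |∑ k ∈ Finset.range i, birkhoffSum f h (len k) (x k)|
        ≤ ∑ k ∈ Finset.range i, (ε / 2 * len k + C) :=
          (Finset.abs_sum_le_sum_abs _ _).trans (Finset.sum_le_sum fun k _ => hC k)
      _ = ε / 2 * (∑ k ∈ Finset.range i, len k : ℕ) + C * i := by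
          rw [Finset.sum_add_distrib, ← Finset.mul_sum, Finset.sum_const, Finset.card_range,
            nsmul_eq_mul, Nat.cast_sum, mul_comm (i : ℝ)]
      _ ≤ ε * (∑ k ∈ Finset.range i, len k : ℕ) := by
          linarith [(le_abs_self _).trans hi]

lemma birkhoffSum_iterate_of_leftInvOn {g : α → α} {K : Set α} (hK : MapsTo g K K)
    (hfg : LeftInvOn f g K) {y : α} (hy : y ∈ K) (a : ℕ) :
    birkhoffSum f h a (g^[a] y) = ∑ k ∈ Finset.range a, h (g^[k + 1] y) := by
  induction a with
  | zero => rfl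
  | succ a ih =>
    rw [birkhoffSum_succ', Finset.sum_range_succ, Function.iterate_succ_apply',
      hfg (hK.iterate a hy), ih, add_comm]

/-- Only a bounded number of the points `g^[k] y` are far from the limit `p` of the iteration. -/
lemma exists_abs_birkhoffSum_iterate_sub_le {g : α → α} {K : Set α} (hK : MapsTo g K K)
    (hfg : LeftInvOn f g K) (hM : ∀ y, |h y| ≤ M) {c : ℝ}
    (hlim : TendstoUniformlyOn (fun r y => h (g^[r] y)) (fun _ => c) atTop K)
    (hc : |c| ≤ M) {ε : ℝ} (hε : 0 < ε) :
    ∃ C, ∀ a, ∀ y ∈ K, |birkhoffSum f h a (g^[a] y) - a * c| ≤ ε * a + C := by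
  obtain ⟨R, hR⟩ := eventually_atTop.1 (Metric.tendstoUniformlyOn_iff.1 hlim ε hε)
  refine ⟨R * (2 * M), fun a y hy => ?_⟩
  have hM₀ : 0 ≤ 2 * M := by linarith [(abs_nonneg _).trans hc]
  have hterm (k : ℕ) : |h (g^[k + 1] y) - c| ≤ ε + if k < R then 2 * M else 0 := by
    split_ifs with hk
    · linarith [abs_sub (h (g^[k + 1] y)) c, hM (g^[k + 1] y)]
    · rw [add_zero, ← Real.dist_eq, dist_comm]
      exact (hR (k + 1) (by lia) y hy).le
  have hcard : (((Finset.range a).filter (· < R)).card : ℝ) ≤ R := by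
    rw [Nat.cast_le]
    refine (Finset.card_le_card fun k hk => ?_).trans_eq (Finset.card_range R)
    exact Finset.mem_range.2 (Finset.mem_filter.1 hk).2
  calc |birkhoffSum f h a (g^[a] y) - a * c|
      = |∑ k ∈ Finset.range a, (h (g^[k + 1] y) - c)| := by
        rw [birkhoffSum_iterate_of_leftInvOn hK hfg hy, Finset.sum_sub_distrib, Finset.sum_const,
          Finset.card_range, nsmul_eq_mul]
    _ ≤ ∑ k ∈ Finset.range a, (ε + if k < R then 2 * M else 0) :=
        (Finset.abs_sum_le_sum_abs _ _).trans (Finset.sum_le_sum fun k _ => hterm k)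
    _ = ε * a + ((Finset.range a).filter (· < R)).card * (2 * M) := by
        rw [Finset.sum_add_distrib, Finset.sum_const, Finset.card_range, nsmul_eq_mul,
          ← Finset.sum_filter, Finset.sum_const, nsmul_eq_mul, mul_comm (a : ℝ)]
    _ ≤ ε * a + R * (2 * M) := by gcongr

end Blocks

/-! ### Dimension of coded sets -/

section Coding

open PiNat Real

lemma le_dimH_range_of_dist_le_rpow {ι E : Type*} [MetricSpace E] {X : ι → E} {Y : ι → ℝ}
    {s : NNReal} {C : ℝ} (hs : 0 < s) (hC : 0 ≤ C) (hY : Icc 0 1 ⊆ range Y)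
    (hXY : ∀ i j, dist (Y i) (Y j) ≤ C * dist (X i) (X j) ^ (s : ℝ)) :
    (s : ℝ≥0∞) ≤ dimH (range X) := by
  have : Nonempty ι := (hY (left_mem_Icc.2 zero_le_one)).nonempty
  have hinv {x : E} (hx : x ∈ range X) : X (Function.invFun X x) = x := Function.invFun_eq hx
  have hholder : HolderOnWith C.toNNReal s (Y ∘ Function.invFun X) (range X) := by
    intro x hx x' hx'
    have := hXY (Function.invFun X x) (Function.invFun X x')
    rw [hinv hx, hinv hx'] at this
    rw [edist_dist, edist_dist, ENNReal.ofReal_rpow_of_nonneg dist_nonneg s.coe_nonneg,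
      ENNReal.ofNNReal_toNNReal, ← ENNReal.ofReal_mul hC]
    exact ENNReal.ofReal_le_ofReal this
  have himage : Icc (0 : ℝ) 1 ⊆ (Y ∘ Function.invFun X) '' range X := by
    intro y hy
    obtain ⟨i, rfl⟩ := hY hy
    refine ⟨X i, mem_range_self i, dist_le_zero.1 ((hXY _ i).trans_eq ?_)⟩
    rw [hinv (mem_range_self i), dist_self, zero_rpow (NNReal.coe_ne_zero.2 hs.ne'), mul_zero]
  have hdim : dimH (Icc (0 : ℝ) 1) = 1 := by
    rw [Real.dimH_of_nonempty_interior (by simp), Module.finrank_self, Nat.cast_one]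
  have hle := (hdim.symm.le.trans (dimH_mono himage)).trans (hholder.dimH_image_le hs)
  rwa [ENNReal.le_div_iff_mul_le (by simp [hs.ne']) (by simp), one_mul] at hle

/-- Reading a code `ω` as the base-`b` expansion of a number makes `X ω ↦ 0.ω₀ω₁…` an `s`-Hölder
map onto `[0, 1]`. -/
theorem le_dimH_range_of_le_dist {E : Type*} [MetricSpace E] {b : ℕ} {s : NNReal} {c ρ : ℝ}
    {X : (ℕ → Fin b) → E} (hs : 0 < s) (hc : 0 < c) (hρ : ρ ∈ Ioo (0 : ℝ) 1)
    (hb : 1 ≤ b * ρ ^ (s : ℝ))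
    (hX : ∀ ω ω', ω ≠ ω' → c * ρ ^ firstDiff ω ω' ≤ dist (X ω) (X ω')) :
    (s : ℝ≥0∞) ≤ dimH (range X) := by
  obtain ⟨hρ₀, hρ₁⟩ := hρ
  have hρs := rpow_pos_of_pos hρ₀ s
  have hb₁ : 1 < b := by
    rw [← Nat.one_lt_cast (α := ℝ)]
    have := rpow_lt_one hρ₀.le hρ₁ (NNReal.coe_pos.2 hs)
    by_contra! hb'
    nlinarith
  refine le_dimH_range_of_dist_le_rpow (Y := ofDigits) (C := c⁻¹ ^ (s : ℝ)) hs (by positivity)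
    (fun y hy => (ofDigits_SurjOn hb₁ hy).imp fun _ => And.right) fun ω ω' => ?_
  obtain rfl | hne := eq_or_ne ω ω'
  · rw [dist_self]
    positivity
  rw [← mul_rpow (by positivity) dist_nonneg]
  calc dist (ofDigits ω) (ofDigits ω')
      ≤ ((b : ℝ) ^ firstDiff ω ω')⁻¹ :=
        abs_ofDigits_sub_ofDigits_le fun i hi => apply_eq_of_lt_firstDiff hi
    _ ≤ (ρ ^ firstDiff ω ω') ^ (s : ℝ) := by
        rw [← rpow_pow_comm hρ₀.le, ← inv_pow]
        gcongr
        rwa [inv_le_iff_one_le_mul₀' (by positivity)]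
    _ ≤ (c⁻¹ * dist (X ω) (X ω')) ^ (s : ℝ) := by
        gcongr
        rw [le_inv_mul_iff₀ hc]
        exact hX ω ω' hne

end Coding

/-! ### Sums under a counting bound -/

section Counting

variable {ι : Type*} {v : ι → ℝ} {s t A : ℝ}

open Real

/-- Weak `ℓ^s` embeds into `ℓ^t` for `s < t`: listing the values in decreasing order, the `k`-th is
at most `(A / k) ^ s⁻¹`. -/
lemma sum_rpow_le_sum_of_card_mul_rpow_le (hs : 0 < s) (ht : 0 ≤ t) (W : Finset ι)
    (hv : ∀ w ∈ W, 0 < v w)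
    (hcard : ∀ w ∈ W, (W.filter fun u => v w ≤ v u).card * v w ^ s ≤ A) :
    ∑ w ∈ W, v w ^ t ≤ ∑ k ∈ Finset.range W.card, (A / (k + 1 : ℕ)) ^ (t / s) := by
  classical
  induction W using Finset.induction_on_min_value v with
  | empty => rfl
  | insert w W hw hmin ih =>
    have hvw := hv w (Finset.mem_insert_self w W)
    have hall : (insert w W).filter (fun u => v w ≤ v u) = insert w W :=
      Finset.filter_true_of_mem fun u hu =>
        (Finset.mem_insert.1 hu).elim (fun h => h ▸ le_rfl) (hmin u)
    have hvws : v w ^ s ≤ A / (W.card + 1 : ℕ) := by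
      rw [le_div_iff₀' (by positivity)]
      simpa only [hall, Finset.card_insert_of_notMem hw] using hcard w (Finset.mem_insert_self w W)
    rw [Finset.sum_insert hw, Finset.card_insert_of_notMem hw, Finset.sum_range_succ, add_comm]
    refine add_le_add (ih (fun u hu => hv u (Finset.mem_insert_of_mem hu)) fun u hu => ?_) ?_
    · refine le_trans ?_ (hcard u (Finset.mem_insert_of_mem hu))
      have := (hv u (Finset.mem_insert_of_mem hu)).le
      gcongr
      exact Finset.subset_insert w W
    · rw [← mul_div_cancel₀ t hs.ne', rpow_mul hvw.le, mul_div_cancel₀ t hs.ne']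
      gcongr

lemma exists_forall_sum_rpow_exists_lt_card_mul_rpow (hs : 0 < s) (hst : s < t) (hA : 0 ≤ A) :
    ∃ B, ∀ (W : Finset ι) (v : ι → ℝ), (∀ w ∈ W, 0 < v w) → B < ∑ w ∈ W, v w ^ t →
      ∃ w ∈ W, A < (W.filter fun u => v w ≤ v u).card * v w ^ s := by
  have hsummable : Summable fun k : ℕ => (A / (k + 1 : ℕ)) ^ (t / s) := by
    simp_rw [div_rpow hA (Nat.cast_nonneg _), div_eq_mul_one_div (A ^ (t / s))]
    exact ((summable_nat_add_iff 1).2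
      (summable_one_div_nat_rpow.2 ((one_lt_div hs).2 hst))).mul_left _
  refine ⟨∑' k : ℕ, (A / (k + 1 : ℕ)) ^ (t / s), fun W v hv hB => ?_⟩
  by_contra! hcard
  refine hB.not_ge ((sum_rpow_le_sum_of_card_mul_rpow_le hs (hs.trans hst).le W hv hcard).trans ?_)
  exact hsummable.sum_le_tsum _ fun k _ => by positivity

end Counting

/-! ### The ruler sequence -/

section Ruler

/-- The exponent of `2` in `i + 1`: an unbounded sequence with bounded averages, whose powers
`2 ^ ruler i` have unbounded averages. -/
def ruler (i : ℕ) : ℕ := padicValNat 2 (i + 1)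

lemma sum_range_ruler_le (n : ℕ) : ∑ i ∈ Finset.range n, ruler i ≤ n := by
  have hfact (n : ℕ) : ∑ i ∈ Finset.range n, ruler i = padicValNat 2 n.factorial := by
    induction n with
    | zero => simp
    | succ n ih =>
      rw [Finset.sum_range_succ, ih, Nat.factorial_succ, padicValNat.mul n.succ_ne_zero
        n.factorial_ne_zero, add_comm, ruler]
  have := sub_one_mul_padicValNat_factorial (p := 2) n
  rw [hfact]
  lia

lemma two_pow_ruler_le (i : ℕ) : 2 ^ ruler i ≤ i + 1 :=
  Nat.le_of_dvd i.succ_pos pow_padicValNat_dvd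

/-- Each of the scales `2 ^ k`, `k < K`, contributes about `n / 2` to the sum, through the
`n / 2 ^ k` multiples of `2 ^ k` up to `n`. -/
lemma mul_le_two_mul_sum_two_pow_ruler (K n : ℕ) :
    K * n ≤ 2 * ∑ i ∈ Finset.range n, 2 ^ ruler i + 2 ^ K := by
  have hterm (i : ℕ) : ∑ k ∈ Finset.range K with 2 ^ k ∣ i + 1, 2 ^ k ≤ 2 * 2 ^ ruler i := by
    rw [← pow_succ']
    refine (Nat.geomSum_lt le_rfl fun _ hk => ?_).le
    exact Nat.lt_succ_of_le ((padicValNat_dvd_iff_le i.succ_ne_zero).1 (Finset.mem_filter.1 hk).2)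
  calc K * n = ∑ _k ∈ Finset.range K, n := by
        rw [Finset.sum_const, Finset.card_range, smul_eq_mul]
    _ ≤ ∑ k ∈ Finset.range K, (n / 2 ^ k * 2 ^ k + 2 ^ k) :=
        Finset.sum_le_sum fun k _ => (Nat.lt_div_mul_add (Nat.two_pow_pos k)).le
    _ = ∑ k ∈ Finset.range K, ∑ i ∈ Finset.range n with 2 ^ k ∣ i + 1, 2 ^ k +
          ∑ k ∈ Finset.range K, 2 ^ k := by
        simp only [Finset.sum_add_distrib, Finset.sum_const, Nat.card_multiples, smul_eq_mul]
    _ = ∑ i ∈ Finset.range n, ∑ k ∈ Finset.range K with 2 ^ k ∣ i + 1, 2 ^ k +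
          ∑ k ∈ Finset.range K, 2 ^ k := by
        simp only [Finset.sum_filter]
        rw [Finset.sum_comm]
    _ ≤ 2 * ∑ i ∈ Finset.range n, 2 ^ ruler i + 2 ^ K := by
        rw [Finset.mul_sum]
        exact add_le_add (Finset.sum_le_sum fun i _ => hterm i)
          (Nat.geomSum_lt le_rfl fun k => Finset.mem_range.1).le

lemma isLittleO_sum_two_pow_ruler :
    (fun n : ℕ => (n : ℝ)) =o[atTop] fun n => ((∑ i ∈ Finset.range n, 2 ^ ruler i : ℕ) : ℝ) := by
  refine Asymptotics.isLittleO_iff.2 fun ε hε => ?_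
  obtain ⟨K, hK⟩ := exists_nat_gt (3 / ε)
  filter_upwards [eventually_ge_atTop (2 ^ K)] with n hn
  have hcard : n ≤ ∑ i ∈ Finset.range n, 2 ^ ruler i := by
    simpa using Finset.card_nsmul_le_sum (Finset.range n) (fun i => 2 ^ ruler i) 1
      fun i _ => Nat.one_le_two_pow
  have hKn : (K * n : ℝ) ≤ 3 * (∑ i ∈ Finset.range n, 2 ^ ruler i : ℕ) := by
    have := mul_le_two_mul_sum_two_pow_ruler K n
    exact_mod_cast (by lia : K * n ≤ 3 * ∑ i ∈ Finset.range n, 2 ^ ruler i)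
  rw [div_lt_iff₀ hε] at hK
  simp only [Real.norm_eq_abs, Nat.abs_cast]
  nlinarith [mul_le_mul_of_nonneg_left hKn hε.le, Nat.cast_nonneg (α := ℝ) n]

end Ruler

/-! ### Prefix codes -/

section PrefixCode

variable {α : Type*} {V W : Set (List α)}

lemma eq_and_eq_of_append_isPrefix_append (hV : IsAntichain (· <+: ·) V)
    (hW : IsAntichain (· <+: ·) W) {v v' w w' : List α} (hv : v ∈ V) (hv' : v' ∈ V) (hw : w ∈ W)
    (hw' : w' ∈ W) (h : v ++ w <+: v' ++ w') : v = v' ∧ w = w' := by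
  obtain rfl : v = v' :=
    (List.prefix_or_prefix_of_prefix ((List.prefix_append v w).trans h)
      (List.prefix_append v' w')).elim (hV.eq hv hv') (hV.eq' hv hv')
  exact ⟨rfl, hW.eq hw hw' ((List.prefix_append_right_inj v).1 h)⟩

lemma isAntichain_isPrefix_image2_append (hV : IsAntichain (· <+: ·) V)
    (hW : IsAntichain (· <+: ·) W) : IsAntichain (· <+: ·) (image2 (· ++ ·) V W) := by
  rintro _ ⟨v, hv, w, hw, rfl⟩ _ ⟨v', hv', w', hw', rfl⟩ hne h
  obtain ⟨rfl, rfl⟩ := eq_and_eq_of_append_isPrefix_append hV hW hv hv' hw hw' h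
  exact hne rfl

lemma injOn_uncurry_append_prod (hV : IsAntichain (· <+: ·) V) (hW : IsAntichain (· <+: ·) W) :
    InjOn (fun x : List α × List α => x.1 ++ x.2) (V ×ˢ W) := fun _ hx _ hy h =>
  Prod.ext_iff.2 (eq_and_eq_of_append_isPrefix_append hV hW hx.1 hy.1 hx.2 hy.2
    ⟨[], (List.append_nil _).trans h⟩)

lemma eq_and_eq_of_replicate_append_singleton_isPrefix {j b b' : α} {m n : ℕ} (hb : b ≠ j)
    (hb' : b' ≠ j) (h : List.replicate m j ++ [b] <+: List.replicate n j ++ [b']) :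
    m = n ∧ b = b' := by
  induction m generalizing n with
  | zero =>
    cases n with
    | zero => simpa using h
    | succ n => exact absurd (List.cons_prefix_cons.1 h).1 hb
  | succ m ih =>
    cases n with
    | zero => exact absurd (List.cons_prefix_cons.1 h).1 hb'.symm
    | succ n => exact (ih (List.cons_prefix_cons.1 h).2).imp_left (congrArg _)

end PrefixCode

/-! ### The cubic model of a neutral fixed point -/

section Cubic

/-- The normal form `u + 18 u³` of `theMap` at each of its fixed points. -/
def cubic (u : ℝ) : ℝ := u + 18 * u ^ 3

lemma strictMono_cubic : StrictMono cubic :=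
  strictMono_id.add ((Odd.strictMono_pow (n := 3) (by decide)).const_mul (by norm_num))

lemma continuous_cubic : Continuous cubic := by unfold cubic; fun_prop

lemma surjective_cubic : Function.Surjective cubic := by
  intro y
  have hbound : y ∈ Icc (cubic (-|y|)) (cubic |y|) := by
    have := pow_nonneg (abs_nonneg y) 3
    unfold cubic
    constructor <;> nlinarith [neg_abs_le y, le_abs_self y]
  obtain ⟨x, -, hx⟩ := intermediate_value_Icc (neg_le_self (abs_nonneg y))
    continuous_cubic.continuousOn hbound
  exact ⟨x, hx⟩

/-- The inverse function of `cubic`, the model of the inverse branches of `theMap`. -/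
def cubicInv : ℝ ≃o ℝ := (strictMono_cubic.orderIsoOfSurjective cubic surjective_cubic).symm

@[simp] lemma cubic_cubicInv (u : ℝ) : cubic (cubicInv u) = u :=
  (strictMono_cubic.orderIsoOfSurjective cubic surjective_cubic).apply_symm_apply u

lemma cubicInv_eq_of_cubic_eq {u v : ℝ} (h : cubic u = v) : cubicInv v = u :=
  strictMono_cubic.injective ((cubic_cubicInv v).trans h.symm)

lemma cubicInv_zero : cubicInv 0 = 0 := cubicInv_eq_of_cubic_eq (by norm_num [cubic])

lemma cubicInv_one : cubicInv 1 = 1 / 3 := cubicInv_eq_of_cubic_eq (by norm_num [cubic])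

lemma cubicInv_mul (u : ℝ) : cubicInv u * (1 + 18 * cubicInv u ^ 2) = u := by
  linear_combination cubic_cubicInv u - (by unfold cubic; ring :
    cubic (cubicInv u) = cubicInv u * (1 + 18 * cubicInv u ^ 2))

lemma cubicInv_neg (u : ℝ) : cubicInv (-u) = -cubicInv u :=
  cubicInv_eq_of_cubic_eq (by rw [cubic, Odd.neg_pow (by decide)]; linarith [cubicInv_mul u])

lemma abs_cubicInv (u : ℝ) : |cubicInv u| = cubicInv |u| := by
  rcases le_total 0 u with hu | hu
  · rw [abs_of_nonneg hu, abs_of_nonneg (cubicInv_zero ▸ cubicInv.monotone hu)]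
  · rw [abs_of_nonpos hu, cubicInv_neg, abs_of_nonpos (cubicInv_zero ▸ cubicInv.monotone hu)]

lemma cubicInv_sq_le_ninth {u : ℝ} (hu : |u| ≤ 1) : cubicInv u ^ 2 ≤ 1 / 9 := by
  rw [← sq_abs, abs_cubicInv, (by norm_num : (1 / 9 : ℝ) = (1 / 3) ^ 2), ← cubicInv_one]
  exact pow_le_pow_left₀ (abs_cubicInv u ▸ abs_nonneg _) (cubicInv.monotone hu) 2

lemma le_cubicInv_sq {u : ℝ} (hu : 1 / 3 ≤ |u|) : 1 / 36 ≤ cubicInv u ^ 2 := by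
  have hsixth : cubicInv (1 / 4) = 1 / 6 := cubicInv_eq_of_cubic_eq (by norm_num [cubic])
  rw [← sq_abs, abs_cubicInv, (by norm_num : (1 / 36 : ℝ) = (1 / 6) ^ 2), ← hsixth]
  exact pow_le_pow_left₀ (hsixth ▸ by norm_num) (cubicInv.monotone (by linarith)) 2

lemma mapsTo_cubicInv : MapsTo cubicInv {u | |u| ≤ 1} {u | |u| ≤ 1} := fun _ hu =>
  (sq_le_one_iff_abs_le_one _).1 ((cubicInv_sq_le_ninth hu).trans (by norm_num))

lemma slopesIn_cubicInv {s : Set ℝ} {m M : ℝ} (hm : 0 ≤ m)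
    (hs : ∀ u ∈ s, cubicInv u ^ 2 ∈ Icc m M) :
    SlopesIn cubicInv s (1 + 54 * M)⁻¹ (1 + 18 * m)⁻¹ := by
  intro u hu v hv huv
  obtain ⟨hmu, huM⟩ := hs u hu
  obtain ⟨hmv, hvM⟩ := hs v hv
  have hdiff : v - u = (1 + 18 * (cubicInv u ^ 2 + cubicInv u * cubicInv v + cubicInv v ^ 2)) *
      (cubicInv v - cubicInv u) := by
    linear_combination cubicInv_mul u - cubicInv_mul v
  have hpos := sub_nonneg.2 (cubicInv.monotone huv)
  rw [mem_Icc, inv_mul_le_iff₀ (by linarith), le_inv_mul_iff₀ (by linarith), hdiff]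
  constructor <;> refine mul_le_mul_of_nonneg_right ?_ hpos
  · nlinarith [sq_nonneg (cubicInv u - cubicInv v)]
  · nlinarith [sq_nonneg (cubicInv u + cubicInv v)]

/-- The reciprocal squares `1 / u²` grow by at least `8` in each step. -/
lemma iterate_cubicInv_sq_le {u : ℝ} (hu : |u| ≤ 1) (r : ℕ) :
    (1 + 8 * r) * (cubicInv^[r] u) ^ 2 ≤ 1 := by
  induction r with
  | zero =>
    simp only [CharP.cast_eq_zero, mul_zero, add_zero, one_mul, Function.iterate_zero, id]
    exact (sq_le_one_iff_abs_le_one u).2 hu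
  | succ r ih =>
    have hr : (0 : ℝ) ≤ r := r.cast_nonneg
    rw [Function.iterate_succ_apply']
    have hninth := cubicInv_sq_le_ninth (mapsTo_cubicInv.iterate r hu)
    rw [← cubicInv_mul (cubicInv^[r] u), mul_pow] at ih
    push_cast
    have ht := sq_nonneg (cubicInv (cubicInv^[r] u))
    generalize cubicInv (cubicInv^[r] u) ^ 2 = t at ih hninth ht ⊢
    refine le_of_mul_le_mul_right (?_ : _ ≤ 1 * (1 + 18 * t) ^ 2) (by positivity)
    have hstep : 1 + 8 * t * (1 + 18 * t) ^ 2 ≤ 1 * (1 + 18 * t) ^ 2 := by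
      nlinarith [mul_nonneg ht (sub_nonneg.2 hninth),
        mul_nonneg (mul_nonneg ht ht) (sub_nonneg.2 hninth)]
    linarith

lemma slopesIn_iterate_cubicInv (r : ℕ) :
    SlopesIn cubicInv^[r] {u | |u| ≤ 1} (((r : ℝ) + 1) ^ 7)⁻¹ 1 := by
  induction r with
  | zero => simpa using SlopesIn.id {u : ℝ | |u| ≤ 1}
  | succ r ih =>
    have hq : SlopesIn cubicInv (cubicInv^[r] '' {u | |u| ≤ 1})
        (1 + 54 * (1 / (1 + 8 * (r + 1))))⁻¹ (1 + 18 * 0)⁻¹ := by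
      refine slopesIn_cubicInv le_rfl ?_
      rintro _ ⟨u, hu, rfl⟩
      refine ⟨sq_nonneg _, ?_⟩
      have := iterate_cubicInv_sq_le hu (r + 1)
      rw [Function.iterate_succ_apply'] at this
      rw [le_div_iff₀' (by positivity)]
      exact_mod_cast this
    have hcomp := hq.comp ih (mapsTo_image _ _) (by positivity) (by positivity) (by positivity)
    rw [Function.iterate_succ']
    refine hcomp.mono Subset.rfl ?_ (by norm_num)
    have hbernoulli : 1 + 7 * (1 / ((r : ℝ) + 1)) ≤ (1 + 1 / (r + 1)) ^ 7 :=
      one_add_mul_le_pow (by linarith [(by positivity : 0 < 1 / ((r : ℝ) + 1))]) 7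
    rw [← mul_inv]
    refine inv_anti₀ (by positivity) ?_
    calc (1 + 54 * (1 / (1 + 8 * ((r : ℝ) + 1)))) * ((r : ℝ) + 1) ^ 7
        ≤ (1 + 7 * (1 / ((r : ℝ) + 1))) * ((r : ℝ) + 1) ^ 7 := by
          gcongr ?_ * _
          rw [mul_one_div, mul_one_div, add_le_add_iff_left, div_le_div_iff₀] <;> linarith
      _ ≤ (1 + 1 / ((r : ℝ) + 1)) ^ 7 * ((r : ℝ) + 1) ^ 7 := by gcongr
      _ = (((r + 1 : ℕ) : ℝ) + 1) ^ 7 := by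
          rw [← mul_pow]
          push_cast
          congr 1
          field_simp

lemma tendstoUniformlyOn_iterate_cubicInv :
    TendstoUniformlyOn (fun r => cubicInv^[r]) (fun _ => 0) atTop {u | |u| ≤ 1} := by
  refine Metric.tendstoUniformlyOn_iff.2 fun ε hε => ?_
  obtain ⟨R, hR⟩ := exists_nat_gt (1 / (8 * ε ^ 2))
  filter_upwards [eventually_ge_atTop R] with r hr u hu
  have hsq := iterate_cubicInv_sq_le hu r
  have hRr : (R : ℝ) ≤ r := by exact_mod_cast hr
  rw [div_lt_iff₀ (by positivity)] at hR
  rw [dist_comm, Real.dist_0_eq_abs]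
  refine abs_lt_of_sq_lt_sq ?_ hε.le
  by_contra! hle
  nlinarith [mul_le_mul_of_nonneg_left hle r.cast_nonneg, sq_pos_of_pos hε,
    mul_le_mul_of_nonneg_right hRr (sq_nonneg ε), sq_nonneg (cubicInv^[r] u)]

lemma hasDerivAt_cubicInv (u : ℝ) : HasDerivAt cubicInv (1 + 54 * cubicInv u ^ 2)⁻¹ u := by
  have hcubic : HasDerivAt cubic (1 + 54 * cubicInv u ^ 2) (cubicInv u) :=
    ((hasDerivAt_id _).add ((hasDerivAt_pow 3 _).const_mul 18)).congr_deriv (by ring)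
  exact hcubic.of_local_left_inverse cubicInv.continuous.continuousAt (by positivity)
    (Eventually.of_forall cubic_cubicInv)

end Cubic

/-! ### Inverse branches of the map -/

section Branch

/-- The inverse branch `j` of `theMap` is `cubicInv` after rescaling by this factor around the
fixed point `theFixedPts j`. -/
def branchScale : Fin 3 → ℝ := ![1, 1 / 2, 1]

/-- The coordinate centred at the fixed point `j` in which the branch `j` becomes `cubicInv`. -/
def branchCoord (j : Fin 3) (x : ℝ) : ℝ := (x - theFixedPts j) / branchScale j

/-- The inverse branch of `theMap` with values in `branchInterval j`. -/
def branch (j : Fin 3) (x : ℝ) : ℝ := theFixedPts j + branchScale j * cubicInv (branchCoord j x)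

/-- The interval on which `theMap` is the `j`-th full branch. -/
def branchInterval (j : Fin 3) : Set ℝ := Icc ((j : ℝ) / 3) ((j + 1) / 3)

lemma branchScale_pos (j : Fin 3) : 0 < branchScale j := by fin_cases j <;> norm_num [branchScale]

lemma branchScale_le_one (j : Fin 3) : branchScale j ≤ 1 := by
  fin_cases j <;> norm_num [branchScale]

lemma branchCoord_zero (x : ℝ) : branchCoord 0 x = x := by
  simp [branchCoord, branchScale, theFixedPts]

lemma branchCoord_one (x : ℝ) : branchCoord 1 x = 2 * x - 1 := by
  norm_num [branchCoord, branchScale, theFixedPts]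
  ring

lemma branchCoord_two (x : ℝ) : branchCoord 2 x = x - 1 := by
  simp [branchCoord, branchScale, theFixedPts]

lemma theFixedPts_add_mul_branchCoord (j : Fin 3) (x : ℝ) :
    theFixedPts j + branchScale j * branchCoord j x = x := by
  rw [branchCoord, mul_div_cancel₀ _ (branchScale_pos j).ne', add_sub_cancel]

lemma mapsTo_branchCoord (j : Fin 3) : MapsTo (branchCoord j) (Icc 0 1) {u | |u| ≤ 1} := by
  rintro x ⟨hx₀, hx₁⟩
  rw [mem_ofPred, abs_le]
  match j with
  | 0 => rw [branchCoord_zero]; constructor <;> linarith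
  | 1 => rw [branchCoord_one]; constructor <;> linarith
  | 2 => rw [branchCoord_two]; constructor <;> linarith

lemma one_third_le_abs_branchCoord {j b : Fin 3} (hb : b ≠ j) {x : ℝ}
    (hx : x ∈ branchInterval b) : 1 / 3 ≤ |branchCoord j x| := by
  obtain ⟨hx₀, hx₁⟩ := hx
  have hbj : (b : ℝ) + 1 ≤ j ∨ (j : ℝ) + 1 ≤ b := by
    exact_mod_cast Nat.lt_or_gt_of_ne (Fin.val_ne_of_ne hb)
  have hb₀ : (0 : ℝ) ≤ b := by positivity
  have hb₂ : (b : ℝ) ≤ 2 := by exact_mod_cast b.is_le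
  rw [le_abs]
  match j with
  | 0 =>
    rw [branchCoord_zero]
    simp only [Fin.val_zero, Nat.cast_zero] at hbj
    grind
  | 1 =>
    rw [branchCoord_one]
    simp only [Fin.val_one, Nat.cast_one] at hbj
    grind
  | 2 =>
    rw [branchCoord_two]
    simp only [Fin.val_two, Nat.cast_ofNat] at hbj
    grind

lemma strictMono_branch (j : Fin 3) : StrictMono (branch j) := fun x y hxy => by
  have := branchScale_pos j
  unfold branch branchCoord
  gcongr

lemma continuous_branch (j : Fin 3) : Continuous (branch j) := by
  unfold branch branchCoord
  have := cubicInv.continuous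
  fun_prop

lemma branch_zero (j : Fin 3) : branch j 0 = j / 3 := by
  fin_cases j <;>
    norm_num [branch, branchCoord, branchScale, theFixedPts, cubicInv_zero, cubicInv_one,
      cubicInv_neg]

lemma branch_one (j : Fin 3) : branch j 1 = (j + 1) / 3 := by
  fin_cases j <;>
    norm_num [branch, branchCoord, branchScale, theFixedPts, cubicInv_zero, cubicInv_one]

lemma branch_mem_branchInterval (j : Fin 3) {x : ℝ} (hx : x ∈ Icc (0 : ℝ) 1) :
    branch j x ∈ branchInterval j :=
  ⟨branch_zero j ▸ (strictMono_branch j).monotone hx.1,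
    branch_one j ▸ (strictMono_branch j).monotone hx.2⟩

lemma branch_mem_Ioo (j : Fin 3) {x : ℝ} (hx : x ∈ Ioo (0 : ℝ) 1) :
    branch j x ∈ Ioo ((j : ℝ) / 3) ((j + 1) / 3) :=
  ⟨branch_zero j ▸ strictMono_branch j hx.1, branch_one j ▸ strictMono_branch j hx.2⟩

lemma add_one_div_three_le_one (j : Fin 3) : ((j : ℝ) + 1) / 3 ≤ 1 := by
  have : (j : ℝ) ≤ 2 := by exact_mod_cast j.is_le
  linarith

lemma branchInterval_subset (j : Fin 3) : branchInterval j ⊆ Icc 0 1 :=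
  Icc_subset_Icc (by positivity) (add_one_div_three_le_one j)

lemma mapsTo_branch_Icc (j : Fin 3) : MapsTo (branch j) (Icc 0 1) (Icc 0 1) := fun _ hx =>
  branchInterval_subset j (branch_mem_branchInterval j hx)

lemma mapsTo_branch_Ioo (j : Fin 3) : MapsTo (branch j) (Ioo 0 1) (Ioo 0 1) := fun _ hx =>
  Ioo_subset_Ioo (by positivity) (add_one_div_three_le_one j) (branch_mem_Ioo j hx)

lemma theMap_eq_of_mem_Ioo (j : Fin 3) {y : ℝ} (hy : y ∈ Ioo ((j : ℝ) / 3) ((j + 1) / 3)) :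
    theMap y = theFixedPts j + branchScale j * cubic (branchCoord j y) := by
  obtain ⟨hy₀, hy₁⟩ := hy
  match j with
  | 0 =>
    have : y ≤ 1 / 3 := by norm_num at hy₁; exact hy₁.le
    simp only [theMap, theFixedPts, branchScale, branchCoord_zero, cubic, if_pos this]
    norm_num
  | 1 =>
    have h₀ : ¬ y ≤ 1 / 3 := by norm_num at hy₀ ⊢; exact hy₀
    have h₁ : y < 2 / 3 := by norm_num at hy₁; exact hy₁
    simp only [theMap, theFixedPts, branchScale, branchCoord_one, cubic, if_neg h₀, if_pos h₁]
    norm_num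
    ring
  | 2 =>
    have h₁ : ¬ y < 2 / 3 := by norm_num at hy₀ ⊢; exact hy₀.le
    have h₀ : ¬ y ≤ 1 / 3 := by linarith
    simp only [theMap, theFixedPts, branchScale, branchCoord_two, cubic, if_neg h₀, if_neg h₁,
      Matrix.cons_val]
    ring

lemma branchCoord_branch (j : Fin 3) (x : ℝ) :
    branchCoord j (branch j x) = cubicInv (branchCoord j x) := by
  rw [branch, branchCoord, add_sub_cancel_left, mul_div_cancel_left₀ _ (branchScale_pos j).ne']

/-- On the closed interval this fails: where two branch intervals meet, `theMap` takes the value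
of only one of the branches. -/
lemma leftInvOn_theMap_branch (j : Fin 3) : LeftInvOn theMap (branch j) (Ioo 0 1) := fun x hx => by
  rw [theMap_eq_of_mem_Ioo j (branch_mem_Ioo j hx), branchCoord_branch, cubic_cubicInv,
    theFixedPts_add_mul_branchCoord]

lemma iterate_branch (j : Fin 3) (r : ℕ) (x : ℝ) :
    (branch j)^[r] x = theFixedPts j + branchScale j * cubicInv^[r] (branchCoord j x) := by
  have hsemiconj : Function.Semiconj (branchCoord j) (branch j) cubicInv := branchCoord_branch j
  rw [← hsemiconj.iterate_right r x, theFixedPts_add_mul_branchCoord]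

lemma slopesIn_branch (j : Fin 3) : SlopesIn (branch j) (Icc 0 1) 7⁻¹ 1 := by
  refine ((slopesIn_cubicInv (m := 0) (M := 1 / 9) le_rfl fun u hu =>
    ⟨sq_nonneg _, cubicInv_sq_le_ninth hu⟩).affine_conj (branchScale_pos j)
      (mapsTo_branchCoord j)).mono Subset.rfl ?_ ?_ <;> norm_num

lemma slopesIn_branch_of_ne {j b : Fin 3} (hb : b ≠ j) :
    SlopesIn (branch j) (branchInterval b) 7⁻¹ (2 / 3) := by
  refine ((slopesIn_cubicInv (s := {u | 1 / 3 ≤ |u| ∧ |u| ≤ 1}) (m := 1 / 36) (M := 1 / 9)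
    (by norm_num) fun u hu => ⟨le_cubicInv_sq hu.1, cubicInv_sq_le_ninth hu.2⟩).affine_conj
      (branchScale_pos j) fun x hx => ⟨one_third_le_abs_branchCoord hb hx,
        mapsTo_branchCoord j (branchInterval_subset b hx)⟩).mono Subset.rfl ?_ ?_ <;> norm_num

lemma slopesIn_iterate_branch (j : Fin 3) (r : ℕ) :
    SlopesIn (branch j)^[r] (Icc 0 1) (((r : ℝ) + 1) ^ 7)⁻¹ 1 := by
  rw [funext (iterate_branch j r)]
  exact (slopesIn_iterate_cubicInv r).affine_conj (branchScale_pos j) (mapsTo_branchCoord j)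

lemma tendstoUniformlyOn_iterate_branch (j : Fin 3) :
    TendstoUniformlyOn (fun r => (branch j)^[r]) (fun _ => theFixedPts j) atTop (Icc 0 1) := by
  refine Metric.tendstoUniformlyOn_iff.2 fun ε hε => ?_
  filter_upwards [Metric.tendstoUniformlyOn_iff.1 tendstoUniformlyOn_iterate_cubicInv ε hε]
    with r hr x hx
  have hlt := hr _ (mapsTo_branchCoord j hx)
  rw [dist_comm, Real.dist_0_eq_abs] at hlt
  rw [iterate_branch, dist_self_add_right, Real.norm_eq_abs, abs_mul,
    abs_of_pos (branchScale_pos j)]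
  exact (mul_le_of_le_one_left (abs_nonneg _) (branchScale_le_one j)).trans_lt hlt

end Branch

/-! ### Distortion away from the neutral fixed points -/

section Distortion

/-- The distance to the set of neutral fixed points. -/
def neutralDist (x : ℝ) : ℝ := Metric.infDist x (range theFixedPts)

lemma neutralDist_nonneg (x : ℝ) : 0 ≤ neutralDist x := Metric.infDist_nonneg

lemma neutralDist_le (j : Fin 3) (x : ℝ) : neutralDist x ≤ |x - theFixedPts j| :=
  Metric.infDist_le_dist_of_mem (mem_range_self j)

lemma exists_neutralDist_eq (x : ℝ) : ∃ j, neutralDist x = |x - theFixedPts j| := by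
  obtain ⟨_, ⟨j, rfl⟩, hj⟩ :=
    (finite_range theFixedPts).isCompact.exists_infDist_eq_dist (range_nonempty _) x
  exact ⟨j, hj⟩

lemma neutralDist_le_one_fourth {x : ℝ} (hx : x ∈ Icc (0 : ℝ) 1) : neutralDist x ≤ 1 / 4 := by
  obtain ⟨hx₀, hx₁⟩ := hx
  by_contra! h
  have h₀ := h.trans_le (neutralDist_le 0 x)
  have h₁ := h.trans_le (neutralDist_le 1 x)
  have h₂ := h.trans_le (neutralDist_le 2 x)
  simp only [theFixedPts, Matrix.cons_val, lt_abs] at h₀ h₁ h₂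
  grind

lemma one_half_le_abs_theFixedPts_sub {j k : Fin 3} (hjk : j ≠ k) :
    1 / 2 ≤ |theFixedPts j - theFixedPts k| := by
  have hfixed (i : Fin 3) : theFixedPts i = (i : ℤ) / 2 := by
    fin_cases i <;> norm_num [theFixedPts]
  have hint : (1 : ℤ) ≤ |(j : ℤ) - k| :=
    Int.one_le_abs (sub_ne_zero.2 (by exact_mod_cast Fin.val_ne_of_ne hjk))
  rw [hfixed, hfixed, ← sub_div, abs_div, abs_two]
  gcongr
  exact_mod_cast hint

lemma abs_branch_sub (j : Fin 3) (x : ℝ) :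
    |branch j x - theFixedPts j| = branchScale j * |cubicInv (branchCoord j x)| := by
  rw [branch, add_sub_cancel_left, abs_mul, abs_of_pos (branchScale_pos j)]

lemma neutralDist_le_branchScale_mul (j : Fin 3) (x : ℝ) :
    neutralDist x ≤ branchScale j * |cubicInv (branchCoord j x)| *
      (1 + 18 * cubicInv (branchCoord j x) ^ 2) := by
  refine (neutralDist_le j x).trans_eq ?_
  rw [mul_assoc, ← abs_of_pos (by positivity : 0 < 1 + 18 * cubicInv (branchCoord j x) ^ 2),
    ← abs_mul, cubicInv_mul, branchCoord, abs_div, abs_of_pos (branchScale_pos j),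
    mul_div_cancel₀ _ (branchScale_pos j).ne']

lemma min_le_neutralDist_branch (j : Fin 3) (x : ℝ) :
    min (branchScale j * |cubicInv (branchCoord j x)|)
      (1 / 2 - branchScale j * |cubicInv (branchCoord j x)|) ≤ neutralDist (branch j x) := by
  obtain ⟨k, hk⟩ := exists_neutralDist_eq (branch j x)
  rw [hk]
  rcases eq_or_ne j k with rfl | hjk
  · exact (min_le_left _ _).trans_eq (abs_branch_sub j x).symm
  · rw [← abs_branch_sub]
    have htriangle := abs_sub_le (theFixedPts j) (branch j x) (theFixedPts k)
    rw [abs_sub_comm (theFixedPts j) (branch j x)] at htriangle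
    exact (min_le_right _ _).trans
      (by linarith only [htriangle, one_half_le_abs_theFixedPts_sub hjk])

lemma abs_cubicInv_branchCoord_le (j : Fin 3) {x : ℝ} (hx : x ∈ Icc (0 : ℝ) 1) :
    |cubicInv (branchCoord j x)| ≤ 1 / 3 :=
  abs_le_of_sq_le_sq ((cubicInv_sq_le_ninth (mapsTo_branchCoord j hx)).trans_eq (by norm_num))
    (by norm_num)

lemma branchScale_mul_abs_cubicInv_le (j : Fin 3) {x : ℝ} (hx : x ∈ Icc (0 : ℝ) 1) :
    branchScale j * |cubicInv (branchCoord j x)| ≤ 1 / 3 :=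
  (mul_le_of_le_one_left (abs_nonneg _) (branchScale_le_one j)).trans
    (abs_cubicInv_branchCoord_le j hx)

lemma neutralDist_le_mul_neutralDist_branch (j : Fin 3) {x : ℝ} (hx : x ∈ Icc (0 : ℝ) 1) :
    neutralDist x ≤ (1 + 18 * cubicInv (branchCoord j x) ^ 2) * neutralDist (branch j x) := by
  have hmin := min_le_neutralDist_branch j x
  have hle := neutralDist_le_branchScale_mul j x
  have hquarter := neutralDist_le_one_fourth hx
  have hthird := branchScale_mul_abs_cubicInv_le j hx
  have hscale := mul_le_of_le_one_left (abs_nonneg (cubicInv (branchCoord j x)))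
    (branchScale_le_one j)
  rw [← sq_abs] at hle ⊢
  generalize |cubicInv (branchCoord j x)| = t at *
  rcases le_total (branchScale j * t) (1 / 4) with h | h
  · rw [min_eq_left (by linarith)] at hmin
    exact hle.trans (by rw [mul_comm]; gcongr)
  · rw [min_eq_right (by linarith)] at hmin
    calc neutralDist x ≤ (1 + 18 * (1 / 4) ^ 2) * (1 / 2 - 1 / 3) := by linarith
      _ ≤ (1 + 18 * t ^ 2) * neutralDist (branch j x) := by gcongr <;> linarith

lemma one_div_twelve_le_neutralDist_branch {j b : Fin 3} (hb : b ≠ j) {x : ℝ}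
    (hx : x ∈ branchInterval b) : 1 / 12 ≤ neutralDist (branch j x) := by
  have hthird := branchScale_mul_abs_cubicInv_le j (branchInterval_subset b hx)
  have hsixth : 1 / 6 ≤ |cubicInv (branchCoord j x)| := by
    refine abs_le_of_sq_le_sq' ?_ (abs_nonneg _) |>.2
    rw [sq_abs]
    exact le_trans (by norm_num) (le_cubicInv_sq (one_third_le_abs_branchCoord hb hx))
  have hscale : 1 / 2 ≤ branchScale j := by fin_cases j <;> norm_num [branchScale]
  refine le_trans (le_min ?_ (by linarith)) (min_le_neutralDist_branch j x)
  calc (1 / 12 : ℝ) = 1 / 2 * (1 / 6) := by norm_num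
    _ ≤ branchScale j * |cubicInv (branchCoord j x)| := by gcongr

lemma hasDerivAt_cubicInv_branchCoord (j : Fin 3) (x : ℝ) :
    HasDerivAt (fun x => cubicInv (branchCoord j x))
      ((1 + 54 * cubicInv (branchCoord j x) ^ 2)⁻¹ * (1 / branchScale j)) x :=
  (hasDerivAt_cubicInv _).comp x (((hasDerivAt_id x).sub_const _).div_const _)

lemma hasDerivAt_branch (j : Fin 3) (x : ℝ) :
    HasDerivAt (branch j) (1 + 54 * cubicInv (branchCoord j x) ^ 2)⁻¹ x := by
  refine (((hasDerivAt_cubicInv_branchCoord j x).const_mul _).const_add _).congr_deriv ?_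
  have := (branchScale_pos j).ne'
  field_simp

/-- The logarithmic derivative `E''/E'` of the derivative of `E` is at most `3 / neutralDist` on
the unit interval. Here `L = log E'`, so that `L'` is the logarithmic derivative. -/
def HasNeutralDistortion (E : ℝ → ℝ) : Prop :=
  ∃ L L' : ℝ → ℝ, (∀ x, HasDerivAt E (Real.exp (L x)) x) ∧ (∀ x, HasDerivAt L (L' x) x) ∧
    ∀ x ∈ Icc (0 : ℝ) 1, |L' x| * neutralDist x ≤ 3

/-- The constant `3` in `HasNeutralDistortion` is the one for which the gain of the factor
`(1 + 18 t²) / (1 + 54 t²)` absorbs the distortion of one further branch. -/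
lemma three_mul_div_add_le (t : ℝ) :
    3 * ((1 + 18 * t ^ 2) / (1 + 54 * t ^ 2)) +
      108 * t ^ 2 * (1 + 18 * t ^ 2) / (1 + 54 * t ^ 2) ^ 2 ≤ 3 := by
  have hpos : 0 < 1 + 54 * t ^ 2 := by positivity
  rw [← mul_div_assoc, div_add_div _ _ hpos.ne' (pow_pos hpos 2).ne', div_le_iff₀ (by positivity)]
  have : 0 ≤ (1 + 54 * t ^ 2) * t ^ 4 := by positivity
  linarith

lemma add_mul_neutralDist_le {n x t : ℝ} {j : Fin 3} (hx : x ∈ Icc (0 : ℝ) 1) (hn₀ : 0 ≤ n)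
    (hn : n * neutralDist (branch j x) ≤ 3) (ht : cubicInv (branchCoord j x) = t) :
    (n * (1 + 54 * t ^ 2)⁻¹ + 108 * |t| / branchScale j / (1 + 54 * t ^ 2) ^ 2) *
      neutralDist x ≤ 3 := by
  have hs := branchScale_pos j
  calc _ ≤ n * (1 + 54 * t ^ 2)⁻¹ * ((1 + 18 * t ^ 2) * neutralDist (branch j x)) +
          108 * |t| / branchScale j / (1 + 54 * t ^ 2) ^ 2 *
            (branchScale j * |t| * (1 + 18 * t ^ 2)) := by
        rw [add_mul]
        gcongr
        · exact ht ▸ neutralDist_le_mul_neutralDist_branch j hx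
        · exact ht ▸ neutralDist_le_branchScale_mul j x
    _ = n * neutralDist (branch j x) * ((1 + 18 * t ^ 2) / (1 + 54 * t ^ 2)) +
          108 * t ^ 2 * (1 + 18 * t ^ 2) / (1 + 54 * t ^ 2) ^ 2 := by
        rw [← sq_abs t]
        field_simp
    _ ≤ _ := by gcongr
    _ ≤ 3 := three_mul_div_add_le t

lemma HasNeutralDistortion.comp_branch {E : ℝ → ℝ} (hE : HasNeutralDistortion E) (j : Fin 3) :
    HasNeutralDistortion fun x => E (branch j x) := by
  obtain ⟨L, L', hL, hL', hbound⟩ := hE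
  set t : ℝ → ℝ := fun x => cubicInv (branchCoord j x) with ht
  have hpos (x : ℝ) : 0 < 1 + 54 * t x ^ 2 := by positivity
  refine ⟨fun x => L (branch j x) - Real.log (1 + 54 * t x ^ 2),
    fun x => L' (branch j x) * (1 + 54 * t x ^ 2)⁻¹ -
      108 * t x / branchScale j / (1 + 54 * t x ^ 2) ^ 2, fun x => ?_, fun x => ?_,
    fun x hx => ?_⟩
  · refine ((hL _).comp x (hasDerivAt_branch j x)).congr_deriv ?_
    rw [Real.exp_sub, Real.exp_log (hpos x), div_eq_mul_inv]
  · have hlog := ((((hasDerivAt_cubicInv_branchCoord j x).pow 2).const_mul 54).const_add 1).log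
      (hpos x).ne'
    refine (((hL' _).comp x (hasDerivAt_branch j x)).sub hlog).congr_deriv ?_
    simp only [ht, Pi.pow_apply]
    field_simp
    ring
  · refine le_trans ?_ (add_mul_neutralDist_le hx (abs_nonneg _)
      (hbound _ (mapsTo_branch_Icc j hx)) (congrFun ht x).symm)
    refine mul_le_mul_of_nonneg_right ((abs_sub _ _).trans_eq ?_) (neutralDist_nonneg x)
    rw [abs_mul, abs_inv, abs_div, abs_div, abs_mul, abs_pow, abs_of_pos (hpos x),
      abs_of_pos (branchScale_pos j), abs_of_pos (by norm_num : (0 : ℝ) < 108)]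

lemma hasNeutralDistortion_wordMap (w : List (Fin 3)) :
    HasNeutralDistortion (wordMap branch w) := by
  induction w using List.reverseRecOn with
  | nil =>
    exact ⟨fun _ => 0, fun _ => 0, fun x => (hasDerivAt_id x).congr_deriv Real.exp_zero.symm,
      fun x => hasDerivAt_const x 0, fun x _ => by simp⟩
  | append_singleton w j ih =>
    exact (funext (wordMap_append w [j]) : wordMap branch (w ++ [j]) = _) ▸ ih.comp_branch j

lemma HasNeutralDistortion.exists_slopesIn {E : ℝ → ℝ} (hE : HasNeutralDistortion E) {K : Set ℝ}
    (hK : Convex ℝ K) (hne : K.Nonempty) (hK₁ : K ⊆ Icc 0 1) {δ : ℝ} (hδ : 0 < δ)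
    (hdist : ∀ x ∈ K, δ ≤ neutralDist x) : ∃ e > 0, SlopesIn E K e (Real.exp (6 / δ) * e) := by
  obtain ⟨L, L', hL, hL', hbound⟩ := hE
  obtain ⟨x₀, hx₀⟩ := hne
  have hL'_le : ∀ x ∈ K, ‖L' x‖ ≤ 3 / δ := fun x hx => by
    rw [le_div_iff₀ hδ, Real.norm_eq_abs]
    exact (mul_le_mul_of_nonneg_left (hdist x hx) (abs_nonneg _)).trans (hbound x (hK₁ hx))
  have hLip : ∀ x ∈ K, |L x - L x₀| ≤ 3 / δ := fun x hx => by
    refine (hK.norm_image_sub_le_of_norm_hasDerivWithin_le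
      (fun y _ => (hL' y).hasDerivWithinAt) hL'_le hx₀ hx).trans
        (mul_le_of_le_one_right (by positivity) ?_)
    rw [← dist_eq_norm]
    exact Real.dist_le_of_mem_Icc_01 (hK₁ hx) (hK₁ hx₀)
  refine ⟨Real.exp (L x₀ - 3 / δ), Real.exp_pos _, SlopesIn.of_deriv
    (fun x => (hL x).differentiableAt) hK fun x hx => ?_⟩
  obtain ⟨h₁, h₂⟩ := abs_le.1 (hLip x hx)
  rw [(hL x).deriv, ← Real.exp_add]
  refine ⟨Real.exp_le_exp.2 (by linarith), Real.exp_le_exp.2 ?_⟩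
  linarith [(by ring : 6 / δ = 2 * (3 / δ))]

lemma exists_slopesIn_wordMap_append_pair (w : List (Fin 3)) {j b : Fin 3} (hb : b ≠ j) :
    ∃ a, SlopesIn (wordMap branch (w ++ [j, b])) (Icc 0 1) a (49 * Real.exp 72 * a) := by
  have hconvex : Convex ℝ (branch j '' branchInterval b) :=
    (isPreconnected_Icc.image _ (continuous_branch j).continuousOn).ordConnected.convex
  have hne : (branchInterval b).Nonempty :=
    ⟨_, branch_mem_branchInterval b (left_mem_Icc.2 zero_le_one)⟩
  obtain ⟨e, he, hslopes⟩ := (hasNeutralDistortion_wordMap w).exists_slopesIn hconvex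
    (hne.image _) (image_subset_iff.2 fun x hx => mapsTo_branch_Icc j (branchInterval_subset b hx))
    (δ := 1 / 12) (by norm_num)
    (forall_mem_image.2 fun x hx => one_div_twelve_le_neutralDist_branch hb hx)
  have hcomp := (hslopes.comp (slopesIn_branch_of_ne hb) (mapsTo_image _ _) he.le (by positivity)
    (by norm_num)).comp (slopesIn_branch b) (fun _ => branch_mem_branchInterval b)
      (by positivity) (by positivity) (by norm_num)
  refine ⟨e / 49, ?_⟩
  rw [(funext (wordMap_append w [j, b]) : wordMap branch (w ++ [j, b]) = _)]
  refine hcomp.mono Subset.rfl (by linarith) ?_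
  norm_num
  nlinarith [Real.exp_pos 72]

end Distortion

/-! ### Cylinders and prefix codes of large total length -/

section Cylinder

/-- The length of the cylinder of the points of the unit interval with itinerary `w`. -/
def cylinderLength (w : List (Fin 3)) : ℝ := wordMap branch w 1 - wordMap branch w 0

lemma cylinderLength_pos (w : List (Fin 3)) : 0 < cylinderLength w :=
  sub_pos.2 (strictMono_wordMap strictMono_branch w zero_lt_one)

lemma SlopesIn.cylinderLength_mem_Icc {w : List (Fin 3)} {a b : ℝ}
    (h : SlopesIn (wordMap branch w) (Icc 0 1) a b) : cylinderLength w ∈ Icc a b := by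
  simpa [cylinderLength] using
    h (left_mem_Icc.2 zero_le_one) (right_mem_Icc.2 zero_le_one) zero_le_one

lemma sum_cylinderLength_append_singleton (w : List (Fin 3)) :
    ∑ b, cylinderLength (w ++ [b]) = cylinderLength w := by
  simp only [cylinderLength, wordMap_append, wordMap_cons, wordMap_nil, branch_zero, branch_one,
    Fin.sum_univ_three]
  norm_num

lemma tendsto_cylinderLength_append_replicate (w : List (Fin 3)) (j : Fin 3) :
    Tendsto (fun n => cylinderLength (w ++ List.replicate n j)) atTop (𝓝 0) := by
  have hw := (continuous_wordMap continuous_branch w).tendsto (theFixedPts j)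
  have hlim {x : ℝ} (hx : x ∈ Icc (0 : ℝ) 1) :=
    hw.comp ((tendstoUniformlyOn_iterate_branch j).tendsto_at hx)
  simpa [cylinderLength, wordMap_append, wordMap_replicate] using
    (hlim (right_mem_Icc.2 zero_le_one)).sub (hlim (left_mem_Icc.2 zero_le_one))

lemma wordMap_branch_one_le_or {v w : List (Fin 3)} (hvw : ¬ v <+: w) (hwv : ¬ w <+: v) :
    wordMap branch v 1 ≤ wordMap branch w 0 ∨ wordMap branch w 1 ≤ wordMap branch v 0 := by
  have hmem := mapsTo_wordMap mapsTo_branch_Icc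
  have hlt {j k : Fin 3} (hjk : j < k) (v w : List (Fin 3)) :
      wordMap branch (j :: v) 1 ≤ wordMap branch (k :: w) 0 :=
    calc wordMap branch (j :: v) 1 ≤ ((j : ℝ) + 1) / 3 :=
          (branch_mem_branchInterval j (hmem v (right_mem_Icc.2 zero_le_one))).2
      _ ≤ k / 3 := by gcongr; exact_mod_cast hjk
      _ ≤ wordMap branch (k :: w) 0 :=
          (branch_mem_branchInterval k (hmem w (left_mem_Icc.2 zero_le_one))).1
  induction v generalizing w with
  | nil => exact absurd w.nil_prefix hvw
  | cons j v ih =>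
    cases w with
    | nil => exact absurd (j :: v).nil_prefix hwv
    | cons k w =>
      rcases lt_trichotomy j k with hjk | rfl | hjk
      · exact .inl (hlt hjk v w)
      · rw [List.prefix_cons_inj] at hvw hwv
        exact (ih hvw hwv).imp (fun h => (strictMono_branch j).monotone h)
          fun h => (strictMono_branch j).monotone h
      · exact .inr (hlt hjk w v)

lemma mul_le_abs_wordMap_sub {v w : List (Fin 3)} (hvw : ¬ v <+: w) (hwv : ¬ w <+: v) {m r : ℝ}
    (hm : 0 ≤ m) (hv : ∃ b, SlopesIn (wordMap branch v) (Icc 0 1) m b)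
    (hw : ∃ b, SlopesIn (wordMap branch w) (Icc 0 1) m b) {x y : ℝ}
    (hx : x ∈ Icc r (1 - r)) (hy : y ∈ Icc r (1 - r)) (hr : 0 ≤ r) :
    m * r ≤ |wordMap branch v x - wordMap branch w y| := by
  have hordered {v w : List (Fin 3)} {x y : ℝ} (hvw : wordMap branch v 1 ≤ wordMap branch w 0)
      (hv : ∃ b, SlopesIn (wordMap branch v) (Icc 0 1) m b) (hx : x ∈ Icc r (1 - r))
      (hy : y ∈ Icc r (1 - r)) : m * r ≤ wordMap branch w y - wordMap branch v x := by
    obtain ⟨b, hb⟩ := hv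
    have hxr : m * r ≤ m * (1 - x) := mul_le_mul_of_nonneg_left (by linarith [hx.2]) hm
    have hslope := (hb ⟨hr.trans hx.1, by linarith [hx.2]⟩ (right_mem_Icc.2 zero_le_one)
      (by linarith [hx.2])).1
    have := (strictMono_wordMap strictMono_branch w).monotone (hr.trans hy.1)
    linarith
  rcases wordMap_branch_one_le_or hvw hwv with h | h
  · rw [abs_sub_comm]
    exact (hordered h hv hx hy).trans (le_abs_self _)
  · exact (hordered h hw hy hx).trans (le_abs_self _)

end Cylinder

section Code

/-- The words `jᵃ⁺¹b` with `b ≠ j` and `a < M`: the itineraries of the first passage from one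
branch to another one, cut off at time `M + 1`. -/
def returnWords (M : ℕ) : Finset (List (Fin 3)) :=
  (Finset.univ.sigma fun j => Finset.range M ×ˢ {j}ᶜ).image
    fun i : (_ : Fin 3) × ℕ × Fin 3 => List.replicate (i.2.1 + 1) i.1 ++ [i.2.2]

lemma mem_returnWords {M : ℕ} {w : List (Fin 3)} : w ∈ returnWords M ↔
    ∃ a j b, a < M ∧ b ≠ j ∧ w = List.replicate (a + 1) j ++ [b] := by
  simp only [returnWords, Finset.mem_image, Finset.mem_sigma, Finset.mem_product,
    Finset.mem_univ, Finset.mem_range, Finset.mem_compl, Finset.mem_singleton, true_and,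
    Sigma.exists, Prod.exists]
  grind

lemma replicate_succ_append_singleton_isPrefix {j j' b b' : Fin 3} {a a' : ℕ} (hb : b ≠ j)
    (hb' : b' ≠ j') (h : List.replicate (a + 1) j ++ [b] <+: List.replicate (a' + 1) j' ++ [b']) :
    j = j' ∧ a = a' ∧ b = b' := by
  obtain rfl : j = j' := (List.cons_prefix_cons.1 h).1
  simpa using eq_and_eq_of_replicate_append_singleton_isPrefix hb hb' h

lemma isAntichain_returnWords (M : ℕ) :
    IsAntichain (· <+: ·) (returnWords M : Set (List (Fin 3))) := by
  intro v hv w hw hne h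
  obtain ⟨a, j, b, -, hb, rfl⟩ := mem_returnWords.1 hv
  obtain ⟨a', j', b', -, hb', rfl⟩ := mem_returnWords.1 hw
  obtain ⟨rfl, rfl, rfl⟩ := replicate_succ_append_singleton_isPrefix hb hb' h
  exact hne rfl

lemma sum_cylinderLength_append_returnWords (w : List (Fin 3)) (M : ℕ) :
    ∑ c ∈ returnWords M, cylinderLength (w ++ c) =
      cylinderLength w - ∑ j, cylinderLength (w ++ List.replicate (M + 1) j) := by
  have hlast (j : Fin 3) (a : ℕ) :
      ∑ b ∈ {j}ᶜ, cylinderLength (w ++ (List.replicate (a + 1) j ++ [b])) =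
        cylinderLength (w ++ List.replicate (a + 1) j) -
          cylinderLength (w ++ List.replicate (a + 1 + 1) j) := by
    rw [eq_sub_iff_add_eq', List.replicate_succ', ← Finset.sum_singleton
      (fun b => cylinderLength (w ++ (List.replicate (a + 1) j ++ [b]))) j,
      Finset.sum_add_sum_compl]
    simp only [← List.append_assoc, sum_cylinderLength_append_singleton]
  rw [returnWords, Finset.sum_image, Finset.sum_sigma]
  · simp only [Finset.sum_product, hlast,
      Finset.sum_range_sub' fun a => cylinderLength (w ++ List.replicate (a + 1) _)]
    rw [Finset.sum_sub_distrib]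
    exact congrArg₂ _ (sum_cylinderLength_append_singleton w) rfl
  · rintro ⟨j, a, b⟩ hi ⟨j', a', b'⟩ hi' heq
    simp only [Finset.mem_coe, Finset.mem_sigma, Finset.mem_product, Finset.mem_compl,
      Finset.mem_singleton] at hi hi'
    obtain ⟨rfl, rfl, rfl⟩ := replicate_succ_append_singleton_isPrefix hi.2.2 hi'.2.2
      ⟨[], (List.append_nil _).trans heq⟩
    rfl

/-- A finite prefix code whose words have inverse branches of uniformly bounded distortion, each
contracting at least by the factor `(2 / 3) ^ N`. -/
structure IsContractingCode (N : ℕ) (W : Finset (List (Fin 3))) : Prop where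
  isAntichain : IsAntichain (· <+: ·) (W : Set (List (Fin 3)))
  exists_slopesIn : ∀ w ∈ W, ∃ a,
    SlopesIn (wordMap branch w) (Icc 0 1) a (49 * Real.exp 72 * a)
  slopesIn : ∀ w ∈ W, SlopesIn (wordMap branch w) (Icc 0 1) 0 ((2 / 3) ^ N)

lemma isContractingCode_singleton_nil : IsContractingCode 0 {[]} where
  isAntichain := by simp
  exists_slopesIn := by
    rintro _ h
    obtain rfl := Finset.mem_singleton.1 h
    refine ⟨1, (SlopesIn.id _).mono Subset.rfl le_rfl ?_⟩
    linarith [Real.one_le_exp (by norm_num : (0 : ℝ) ≤ 72)]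
  slopesIn := by
    rintro _ h
    obtain rfl := Finset.mem_singleton.1 h
    exact (SlopesIn.id _).mono Subset.rfl zero_le_one (pow_zero _).ge

lemma slopesIn_wordMap_of_mem_returnWords {M : ℕ} {c : List (Fin 3)} (hc : c ∈ returnWords M) :
    SlopesIn (wordMap branch c) (Icc 0 1) 0 (2 / 3) := by
  obtain ⟨a, j, b, -, hb, rfl⟩ := mem_returnWords.1 hc
  have hpair := (slopesIn_branch_of_ne hb).comp (slopesIn_branch b)
    (fun _ => branch_mem_branchInterval b) (by norm_num) (by norm_num) (by norm_num)
  have hmaps : MapsTo (fun x => branch j (branch b x)) (Icc 0 1) (Icc 0 1) :=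
    (mapsTo_branch_Icc j).comp (mapsTo_branch_Icc b)
  have hword : wordMap branch (List.replicate (a + 1) j ++ [b]) =
      fun x => (branch j)^[a] (branch j (branch b x)) := funext fun x => by
    rw [wordMap_append, wordMap_replicate, Function.iterate_succ_apply, wordMap_cons, wordMap_nil]
  rw [hword]
  exact ((slopesIn_iterate_branch j a).comp hpair hmaps (by positivity) zero_le_one
    (by norm_num)).mono Subset.rfl (by positivity) (by norm_num)

lemma IsContractingCode.image₂_append {N : ℕ} {W : Finset (List (Fin 3))}
    (hW : IsContractingCode N W) (M : ℕ) :
    IsContractingCode (N + 1) (Finset.image₂ (· ++ ·) W (returnWords M)) where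
  isAntichain := by
    rw [Finset.coe_image₂]
    exact isAntichain_isPrefix_image2_append hW.isAntichain (isAntichain_returnWords M)
  exists_slopesIn := Finset.forall_mem_image₂.2 fun w _ c hc => by
    obtain ⟨a, j, b, -, hb, rfl⟩ := mem_returnWords.1 hc
    rw [List.replicate_succ', List.append_assoc, ← List.append_assoc w]
    exact exists_slopesIn_wordMap_append_pair _ hb
  slopesIn := Finset.forall_mem_image₂.2 fun w hw c hc => by
    rw [(funext (wordMap_append w c) : wordMap branch (w ++ c) = _), pow_succ]
    simpa only [zero_mul] using (hW.slopesIn w hw).comp (slopesIn_wordMap_of_mem_returnWords hc)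
      (mapsTo_wordMap mapsTo_branch_Icc c) le_rfl (by positivity) le_rfl

lemma tendsto_sum_cylinderLength_image₂_append {W : Finset (List (Fin 3))}
    (hW : IsAntichain (· <+: ·) (W : Set (List (Fin 3)))) :
    Tendsto (fun M => ∑ w ∈ Finset.image₂ (· ++ ·) W (returnWords M), cylinderLength w) atTop
      (𝓝 (∑ w ∈ W, cylinderLength w)) := by
  have hsum (M : ℕ) : ∑ w ∈ Finset.image₂ (· ++ ·) W (returnWords M), cylinderLength w =
      ∑ w ∈ W, (cylinderLength w - ∑ j, cylinderLength (w ++ List.replicate (M + 1) j)) := by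
    simp only [← sum_cylinderLength_append_returnWords]
    rw [← Finset.sum_product', ← Finset.image_uncurry_product, Finset.sum_image]
    · rfl
    rw [Finset.coe_product]
    exact injOn_uncurry_append_prod hW (isAntichain_returnWords M)
  simp only [hsum]
  refine tendsto_finsetSum _ fun w _ => ?_
  simpa using (tendsto_finsetSum Finset.univ fun j _ =>
    (tendsto_cylinderLength_append_replicate w j).comp (tendsto_add_atTop_nat 1)).const_sub
      (cylinderLength w)

lemma exists_isContractingCode (N : ℕ) :
    ∃ W, IsContractingCode N W ∧ 1 / 2 < ∑ w ∈ W, cylinderLength w := by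
  induction N with
  | zero =>
    refine ⟨_, isContractingCode_singleton_nil, ?_⟩
    norm_num [cylinderLength]
  | succ N ih =>
    obtain ⟨W, hW, hsum⟩ := ih
    obtain ⟨M, hM⟩ := ((tendsto_sum_cylinderLength_image₂_append hW.isAntichain).eventually_const_lt
      hsum).exists
    exact ⟨_, hW.image₂_append M, hM⟩

lemma IsContractingCode.lt_sum_rpow {N : ℕ} {W : Finset (List (Fin 3))}
    (hW : IsContractingCode N W) (hsum : 1 / 2 < ∑ w ∈ W, cylinderLength w) {t : ℝ} (ht : t < 1) :
    1 / 2 * ((2 / 3 : ℝ) ^ (t - 1)) ^ N < ∑ w ∈ W, cylinderLength w ^ t := by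
  calc 1 / 2 * ((2 / 3 : ℝ) ^ (t - 1)) ^ N
      < (∑ w ∈ W, cylinderLength w) * ((2 / 3 : ℝ) ^ (t - 1)) ^ N := by gcongr
    _ = ∑ w ∈ W, cylinderLength w * ((2 / 3 : ℝ) ^ N) ^ (t - 1) := by
      rw [Finset.sum_mul, ← Real.rpow_mul_natCast (by norm_num), mul_comm (t - 1),
        Real.rpow_natCast_mul (by norm_num)]
    _ ≤ ∑ w ∈ W, cylinderLength w * cylinderLength w ^ (t - 1) := by
      refine Finset.sum_le_sum fun w hw => mul_le_mul_of_nonneg_left ?_ (cylinderLength_pos w).le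
      exact Real.rpow_le_rpow_of_nonpos (cylinderLength_pos w)
        (hW.slopesIn w hw).cylinderLength_mem_Icc.2 (by linarith)
    _ = ∑ w ∈ W, cylinderLength w ^ t := Finset.sum_congr rfl fun w _ => by
      rw [Real.rpow_sub_one (cylinderLength_pos w).ne', mul_div_cancel₀ _
        (cylinderLength_pos w).ne']

/-- Since the codes of high order have arbitrarily large `t`-dimensional volume for `s < t < 1`,
some scale is shared by sufficiently many of the words. -/
theorem exists_code_le_card_mul_rpow {s A : ℝ} (hs : s ∈ Ioo 0 1) (hA : 0 ≤ A) :
    ∃ W : Finset (List (Fin 3)), ∃ m ∈ Ioc (0 : ℝ) 1,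
      IsAntichain (· <+: ·) (W : Set (List (Fin 3))) ∧
      (∀ w ∈ W, ∃ b, SlopesIn (wordMap branch w) (Icc 0 1) m b) ∧ A ≤ W.card * m ^ s := by
  obtain ⟨t, hst, ht⟩ := exists_between hs.2
  set D := 49 * Real.exp 72
  have hD₁ : 1 ≤ D := by linarith [Real.one_le_exp (by norm_num : (0 : ℝ) ≤ 72)]
  obtain ⟨B, hB⟩ := exists_forall_sum_rpow_exists_lt_card_mul_rpow (ι := List (Fin 3)) hs.1 hst
    (by positivity : 0 ≤ A * D ^ s)
  obtain ⟨N, hN⟩ := pow_unbounded_of_one_lt (2 * B)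
    (Real.one_lt_rpow_of_pos_of_lt_one_of_neg (by norm_num : (0 : ℝ) < 2 / 3) (by norm_num)
      (by linarith : t - 1 < 0))
  obtain ⟨W, hW, hsum⟩ := exists_isContractingCode N
  obtain ⟨w, hw, hcard⟩ := hB W cylinderLength (fun w _ => cylinderLength_pos w)
    (lt_trans (by linarith) (hW.lt_sum_rpow hsum ht))
  have hw₀ := cylinderLength_pos w
  have hw₁ : cylinderLength w ≤ 1 := (hW.slopesIn w hw).cylinderLength_mem_Icc.2.trans
    (pow_le_one₀ (by norm_num) (by norm_num))
  refine ⟨W.filter fun u => cylinderLength w ≤ cylinderLength u, cylinderLength w / D,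
    ⟨by positivity, div_le_one_of_le₀ (hw₁.trans hD₁) (by positivity)⟩,
    hW.isAntichain.subset (Finset.coe_subset.2 (Finset.filter_subset _ _)), fun u hu => ?_, ?_⟩
  · obtain ⟨huW, hwu⟩ := Finset.mem_filter.1 hu
    obtain ⟨a, hslopes⟩ := hW.exists_slopesIn u huW
    refine ⟨_, hslopes.mono Subset.rfl ?_ le_rfl⟩
    rw [div_le_iff₀' (by positivity)]
    exact hwu.trans hslopes.cylinderLength_mem_Icc.2
  · rw [Real.div_rpow hw₀.le (by positivity), ← mul_div_assoc, le_div_iff₀ (by positivity)]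
    exact hcard.le

end Code

/-! ### Words spending prescribed proportions of time near the fixed points -/

section ProportionalWord

lemma theFixedPts_mem_Icc (j : Fin 3) : theFixedPts j ∈ Icc (0 : ℝ) 1 := by
  fin_cases j <;> norm_num [theFixedPts]

lemma tendstoUniformlyOn_comp_iterate_branch {h : ℝ → ℝ} (hh : Continuous h) (j : Fin 3) :
    TendstoUniformlyOn (fun r x => h ((branch j)^[r] x)) (fun _ => h (theFixedPts j)) atTop
      (Icc 0 1) :=
  UniformContinuousOn.comp_tendstoUniformlyOn_eventually
    (.of_forall fun r _ hx => (mapsTo_branch_Icc j).iterate r hx) (fun _ _ => theFixedPts_mem_Icc j)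
    (isCompact_Icc.uniformContinuousOn_of_continuous hh.continuousOn)
    (tendstoUniformlyOn_iterate_branch j)

lemma exists_abs_birkhoffSum_flatMap_replicate_sub_le {h : ℝ → ℝ} {M ε : ℝ} (hh : Continuous h)
    (hM : ∀ y, |h y| ≤ M) (hε : 0 < ε) (l : List (Fin 3)) :
    ∃ C, ∀ a : Fin 3 → ℕ, ∀ y ∈ Ioo (0 : ℝ) 1,
      |birkhoffSum theMap h (l.flatMap fun j => List.replicate (a j) j).length
          (wordMap branch (l.flatMap fun j => List.replicate (a j) j) y) -
        (l.map fun j => a j * h (theFixedPts j)).sum| ≤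
      ε * (l.flatMap fun j => List.replicate (a j) j).length + C := by
  induction l with
  | nil => exact ⟨0, fun a y _ => by simp⟩
  | cons j l ih =>
    obtain ⟨C, hC⟩ := ih
    obtain ⟨C', hC'⟩ := exists_abs_birkhoffSum_iterate_sub_le (mapsTo_branch_Ioo j)
      (leftInvOn_theMap_branch j) hM
      ((tendstoUniformlyOn_comp_iterate_branch hh j).mono Ioo_subset_Icc_self) (hM _) hε
    refine ⟨C' + C, fun a y hy => ?_⟩
    have hhead := hC' (a j) _
      (mapsTo_wordMap mapsTo_branch_Ioo (l.flatMap fun j => List.replicate (a j) j) hy)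
    rw [List.flatMap_cons, birkhoffSum_wordMap_append mapsTo_branch_Ioo leftInvOn_theMap_branch h
      hy, wordMap_replicate, List.map_cons, List.sum_cons, List.length_append,
      List.length_replicate, Nat.cast_add, add_sub_add_comm]
    linarith [(abs_add_le _ _).trans (add_le_add hhead (hC a y hy))]

lemma slopesIn_wordMap_flatMap_replicate {a : Fin 3 → ℕ} {N : ℕ} (ha : ∀ j, a j ≤ N)
    (l : List (Fin 3)) :
    SlopesIn (wordMap branch (l.flatMap fun j => List.replicate (a j) j)) (Icc 0 1)
      ((((N : ℝ) + 1) ^ 7)⁻¹ ^ l.length) 1 := by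
  induction l with
  | nil => exact SlopesIn.id _
  | cons j l ih =>
    have hj : SlopesIn (wordMap branch (List.replicate (a j) j)) (Icc 0 1)
        (((N : ℝ) + 1) ^ 7)⁻¹ 1 := by
      rw [(funext (wordMap_replicate (a j) j) : wordMap branch _ = _)]
      refine (slopesIn_iterate_branch j (a j)).mono Subset.rfl ?_ le_rfl
      gcongr
      exact ha j
    rw [List.flatMap_cons, (funext (wordMap_append _ _) : wordMap branch (_ ++ _) = _),
      List.length_cons, pow_succ']
    simpa only [one_mul] using hj.comp ih (mapsTo_wordMap mapsTo_branch_Icc _) (by positivity)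
      zero_le_one (by positivity)

/-- The word `0^a₀ 1^a₁ 2^a₂` with `a_j = ⌊p_j N⌋`: its itinerary spends a proportion close to `p_j`
of its time close to the `j`-th fixed point. -/
def proportionalWord (p : Fin 3 → ℝ) (N : ℕ) : List (Fin 3) :=
  (List.finRange 3).flatMap fun j => List.replicate ⌊p j * N⌋₊ j

variable {p : Fin 3 → ℝ}

lemma length_proportionalWord (p : Fin 3 → ℝ) (N : ℕ) :
    (proportionalWord p N).length = ∑ j, ⌊p j * N⌋₊ := by
  simp only [proportionalWord, List.length_flatMap, List.length_replicate, Fin.sum_univ_def]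

lemma length_proportionalWord_le (hp : p ∈ simplexS) (N : ℕ) :
    (proportionalWord p N).length ≤ N := by
  rw [length_proportionalWord, ← Nat.cast_le (α := ℝ), Nat.cast_sum]
  calc ∑ j, (⌊p j * N⌋₊ : ℝ) ≤ ∑ j, p j * N :=
        Finset.sum_le_sum fun j _ => Nat.floor_le (mul_nonneg (hp.1 j).1 N.cast_nonneg)
    _ = N := by rw [← Finset.sum_mul, hp.2, one_mul]

lemma le_length_proportionalWord_add (hp : p ∈ simplexS) (N : ℕ) :
    N ≤ (proportionalWord p N).length + 3 := by
  rw [length_proportionalWord, ← Nat.cast_le (α := ℝ), Nat.cast_add, Nat.cast_sum]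
  calc (N : ℝ) = ∑ j, p j * N := by rw [← Finset.sum_mul, hp.2, one_mul]
    _ ≤ ∑ j, ((⌊p j * N⌋₊ : ℝ) + 1) := Finset.sum_le_sum fun j _ => (Nat.lt_floor_add_one _).le
    _ = ∑ j, (⌊p j * N⌋₊ : ℝ) + (3 : ℕ) := by simp [Finset.sum_add_distrib]

lemma slopesIn_wordMap_proportionalWord_two_pow (hp : p ∈ simplexS) (r : ℕ) :
    SlopesIn (wordMap branch (proportionalWord p (2 ^ r))) (Icc 0 1)
      ((128⁻¹ ^ 3) ^ (r + 1)) 1 := by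
  have hfloor (j : Fin 3) : ⌊p j * (2 ^ r : ℕ)⌋₊ ≤ 2 ^ r :=
    Nat.floor_le_of_le (mul_le_of_le_one_left (Nat.cast_nonneg _) (hp.1 j).2)
  refine (slopesIn_wordMap_flatMap_replicate hfloor _).mono Subset.rfl ?_ le_rfl
  rw [List.length_finRange, pow_right_comm, inv_pow]
  gcongr
  calc (((2 ^ r : ℕ) : ℝ) + 1) ^ 7 ≤ (2 ^ (r + 1)) ^ 7 := by
        gcongr
        push_cast
        linarith [one_le_pow₀ (one_le_two (α := ℝ)) (n := r), pow_succ (2 : ℝ) r]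
    _ = 128 ^ (r + 1) := by rw [pow_right_comm]; norm_num

lemma abs_sum_floor_mul_le {ι : Type*} [Fintype ι] {p c : ι → ℝ} {M : ℝ} (hp : ∀ j, 0 ≤ p j)
    (hpc : ∑ j, p j * c j = 0) (hc : ∀ j, |c j| ≤ M) (N : ℕ) :
    |∑ j, (⌊p j * N⌋₊ : ℝ) * c j| ≤ Fintype.card ι * M := by
  have hterm (j : ι) : |(p j * N - ⌊p j * N⌋₊) * c j| ≤ M := by
    have hfract : |p j * N - ⌊p j * N⌋₊| ≤ 1 := abs_le.2
      ⟨by linarith [Nat.floor_le (mul_nonneg (hp j) N.cast_nonneg)],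
        by linarith [Nat.lt_floor_add_one (p j * N)]⟩
    rw [abs_mul]
    exact (mul_le_of_le_one_left (abs_nonneg _) hfract).trans (hc j)
  calc |∑ j, (⌊p j * N⌋₊ : ℝ) * c j|
      = |∑ j, (p j * N - ⌊p j * N⌋₊) * c j| := by
        rw [← abs_neg, ← Finset.sum_neg_distrib, ← add_zero (∑ j, -_), ← mul_zero (N : ℝ), ← hpc,
          Finset.mul_sum, ← Finset.sum_add_distrib]
        exact congrArg _ (Finset.sum_congr rfl fun j _ => by ring)
    _ ≤ ∑ _j : ι, M :=
        (Finset.abs_sum_le_sum_abs _ _).trans (Finset.sum_le_sum fun j _ => hterm j)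
    _ = Fintype.card ι * M := by simp

lemma exists_abs_birkhoffSum_proportionalWord_le (hp : p ∈ simplexS) {h : ℝ → ℝ} {M ε : ℝ}
    (hh : Continuous h) (hM : ∀ y, |h y| ≤ M) (hph : ∑ j, p j * h (theFixedPts j) = 0)
    (hε : 0 < ε) :
    ∃ C, ∀ N, ∀ y ∈ Ioo (0 : ℝ) 1,
      |birkhoffSum theMap h (proportionalWord p N).length
        (wordMap branch (proportionalWord p N) y)| ≤ ε * (proportionalWord p N).length + C := by
  obtain ⟨C, hC⟩ :=
    exists_abs_birkhoffSum_flatMap_replicate_sub_le hh hM hε (List.finRange 3)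
  refine ⟨C + Fintype.card (Fin 3) * M, fun N y hy => ?_⟩
  have hdev := hC (fun j => ⌊p j * N⌋₊) y hy
  have hmean := abs_sum_floor_mul_le (fun j => (hp.1 j).1) hph (fun _ => hM _) N
  rw [← Fin.sum_univ_def] at hdev
  rw [proportionalWord]
  linarith [(abs_sub_abs_le_abs_sub _ _).trans hdev]

end ProportionalWord

/-! ### Coded points in the basin of a neutral measure -/

section CodedPoints

variable {p : Fin 3 → ℝ} {v : ℕ → List (Fin 3)} {x : ℕ → ℝ}

/-- The `i`-th block of a coded itinerary: the code word `v` followed by an excursion of length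
about `2 ^ ruler i` to the neutral fixed points. The letter `1` in between keeps the points with
this itinerary away from the ends of the cylinder of `v`. -/
def excursionWord (p : Fin 3 → ℝ) (v : List (Fin 3)) (i : ℕ) : List (Fin 3) :=
  v ++ 1 :: proportionalWord p (2 ^ ruler i)

lemma length_excursionWord (p : Fin 3 → ℝ) (v : List (Fin 3)) (i : ℕ) :
    (excursionWord p v i).length = v.length + (proportionalWord p (2 ^ ruler i)).length + 1 := by
  rw [excursionWord, List.length_append, List.length_cons, add_assoc]

lemma wordMap_excursionWord_mem_Ioo (p : Fin 3 → ℝ) (v : List (Fin 3)) (i : ℕ) {y : ℝ}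
    (hy : y ∈ Icc (0 : ℝ) 1) : wordMap branch (excursionWord p v i) y ∈ Ioo (0 : ℝ) 1 := by
  rw [excursionWord, wordMap_append, wordMap_cons]
  obtain ⟨hlower, hupper⟩ := branch_mem_branchInterval 1
    (mapsTo_wordMap mapsTo_branch_Icc (proportionalWord p (2 ^ ruler i)) hy)
  refine mapsTo_wordMap mapsTo_branch_Ioo v ⟨?_, ?_⟩
  · exact lt_of_lt_of_le (by norm_num) hlower
  · exact hupper.trans_lt (by norm_num)

lemma slopesIn_wordMap_excursionWord (hp : p ∈ simplexS) {v : List (Fin 3)} {m b : ℝ} (hm : 0 ≤ m)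
    (hv : SlopesIn (wordMap branch v) (Icc 0 1) m b) (i : ℕ) :
    SlopesIn (wordMap branch (excursionWord p v i)) (Icc 0 1)
      (m * (7⁻¹ * (128⁻¹ ^ 3) ^ (ruler i + 1))) b := by
  have hmaps := mapsTo_wordMap mapsTo_branch_Icc (proportionalWord p (2 ^ ruler i))
  have htail := (slopesIn_branch 1).comp (slopesIn_wordMap_proportionalWord_two_pow hp (ruler i))
    hmaps (by norm_num) zero_le_one (by positivity)
  rw [excursionWord, (funext (wordMap_append _ _) : wordMap branch (_ ++ _) = _)]
  simpa only [mul_one, wordMap_cons] using hv.comp htail ((mapsTo_branch_Icc 1).comp hmaps) hm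
    ((cylinderLength_pos v).le.trans hv.cylinderLength_mem_Icc.2) (by positivity)

lemma isLittleO_sum_length_excursionWord (hp : p ∈ simplexS) (v : ℕ → List (Fin 3)) :
    (fun n : ℕ => (n : ℝ)) =o[atTop] fun n =>
      ((∑ i ∈ Finset.range n, (excursionWord p (v i) i).length : ℕ) : ℝ) := by
  refine isLittleO_sum_two_pow_ruler.trans_isBigO (.of_bound 3 (.of_forall fun n => ?_))
  simp only [Real.norm_eq_abs, Nat.abs_cast]
  norm_cast
  rw [Finset.mul_sum]
  refine Finset.sum_le_sum fun i _ => ?_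
  have := le_length_proportionalWord_add hp (2 ^ ruler i)
  rw [length_excursionWord]
  lia

lemma isLittleO_length_excursionWord (hp : p ∈ simplexS) {L : ℕ}
    (hL : ∀ i, (v i).length ≤ L) :
    (fun n => ((excursionWord p (v n) n).length : ℝ)) =o[atTop] fun n =>
      ((∑ i ∈ Finset.range n, (excursionWord p (v i) i).length : ℕ) : ℝ) := by
  refine Asymptotics.IsBigO.trans_isLittleO (.of_bound (L + 3 : ℕ) ?_)
    (isLittleO_sum_length_excursionWord hp v)
  filter_upwards [eventually_ge_atTop 1] with n hn
  simp only [Real.norm_eq_abs, Nat.abs_cast]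
  norm_cast
  have := length_proportionalWord_le hp (2 ^ ruler n)
  have := two_pow_ruler_le n
  have := hL n
  rw [length_excursionWord]
  nlinarith

/-- `x i` is the point whose itinerary is made of the blocks `excursionWord p (v k) k`, `k ≥ i`. -/
def IsCodedOrbit (p : Fin 3 → ℝ) (v : ℕ → List (Fin 3)) (x : ℕ → ℝ) : Prop :=
  ∀ i, x i ∈ Icc (0 : ℝ) 1 ∧ x i = wordMap branch (excursionWord p (v i) i) (x (i + 1))

lemma exists_isCodedOrbit (p : Fin 3 → ℝ) (v : ℕ → List (Fin 3)) : ∃ x, IsCodedOrbit p v x :=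
  exists_forall_eq_apply_succ isCompact_Icc (nonempty_Icc.2 zero_le_one)
    (fun _ => continuous_wordMap continuous_branch _) fun _ => mapsTo_wordMap mapsTo_branch_Icc _

namespace IsCodedOrbit

lemma mem_Ioo (hx : IsCodedOrbit p v x) (i : ℕ) : x i ∈ Ioo (0 : ℝ) 1 := by
  rw [(hx i).2]
  exact wordMap_excursionWord_mem_Ioo p (v i) i (hx (i + 1)).1

lemma iterate_theMap (hx : IsCodedOrbit p v x) (i : ℕ) :
    theMap^[(excursionWord p (v i) i).length] (x i) = x (i + 1) := by
  rw [(hx i).2]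
  exact iterate_wordMap mapsTo_branch_Ioo leftInvOn_theMap_branch (hx.mem_Ioo (i + 1)) _

lemma pow_mul_abs_sub_le {v' : ℕ → List (Fin 3)} {x' : ℕ → ℝ} (hp : p ∈ simplexS)
    (hx : IsCodedOrbit p v x) (hx' : IsCodedOrbit p v' x') {m : ℝ} (hm : 0 ≤ m)
    (hv : ∀ i, ∃ b, SlopesIn (wordMap branch (v i)) (Icc 0 1) m b) {n : ℕ}
    (hvv' : ∀ i < n, v i = v' i) :
    (m * 7⁻¹) ^ n * (128⁻¹ ^ 3) ^ (∑ i ∈ Finset.range n, (ruler i + 1)) * |x n - x' n| ≤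
      |x 0 - x' 0| := by
  induction n with
  | zero => simp
  | succ n ih =>
    refine le_trans ?_ (ih fun i hi => hvv' i (hi.trans n.lt_succ_self))
    obtain ⟨b, hb⟩ := hv n
    have hstep := (slopesIn_wordMap_excursionWord hp hm hb n).mul_abs_sub_le (hx (n + 1)).1
      (hx' (n + 1)).1
    rw [← (hx n).2, hvv' n n.lt_succ_self, ← (hx' n).2] at hstep
    rw [Finset.sum_range_succ, pow_succ, pow_add, mul_mul_mul_comm, mul_assoc]
    gcongr
    rwa [mul_assoc m]

/-- Up to the first difference the sum of the exponents `ruler i + 1` is at most `2 n`, and at the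
first difference the two points lie in the middle parts of disjoint cylinders. -/
lemma mul_pow_le_abs_sub {v' : ℕ → List (Fin 3)} {x' : ℕ → ℝ} (hp : p ∈ simplexS)
    (hx : IsCodedOrbit p v x) (hx' : IsCodedOrbit p v' x') {m : ℝ} (hm : 0 ≤ m)
    (hv : ∀ i, ∃ b, SlopesIn (wordMap branch (v i)) (Icc 0 1) m b)
    (hv' : ∀ i, ∃ b, SlopesIn (wordMap branch (v' i)) (Icc 0 1) m b) {n : ℕ}
    (hlt : ∀ i < n, v i = v' i) (hn : ¬ v n <+: v' n) (hn' : ¬ v' n <+: v n) :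
    m * (1 / 3) * (m * (7⁻¹ * (128⁻¹ ^ 3) ^ 2)) ^ n ≤ |x 0 - x' 0| := by
  have hmid {v : ℕ → List (Fin 3)} {x : ℕ → ℝ} (hx : IsCodedOrbit p v x) :
      ∃ y ∈ Icc (1 / 3 : ℝ) (1 - 1 / 3), x n = wordMap branch (v n) y := by
    refine ⟨branch 1 (wordMap branch (proportionalWord p (2 ^ ruler n)) (x (n + 1))), ?_, ?_⟩
    · convert branch_mem_branchInterval 1 (mapsTo_wordMap mapsTo_branch_Icc _ (hx (n + 1)).1)
      norm_num [branchInterval]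
    · rw [(hx n).2, excursionWord, wordMap_append, wordMap_cons]
  have hsep : m * (1 / 3) ≤ |x n - x' n| := by
    obtain ⟨y, hy, hxy⟩ := hmid hx
    obtain ⟨y', hy', hxy'⟩ := hmid hx'
    rw [hxy, hxy']
    exact mul_le_abs_wordMap_sub hn hn' hm (hv n) (hv' n) hy hy' (by norm_num)
  have hexponent : ∑ i ∈ Finset.range n, (ruler i + 1) ≤ 2 * n := by
    rw [Finset.sum_add_distrib, Finset.sum_const, Finset.card_range, smul_eq_mul, mul_one]
    linarith [sum_range_ruler_le n]
  calc m * (1 / 3) * (m * (7⁻¹ * (128⁻¹ ^ 3) ^ 2)) ^ n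
      = (m * 7⁻¹) ^ n * (128⁻¹ ^ 3) ^ (2 * n) * (m * (1 / 3)) := by
        rw [← mul_assoc m, mul_pow, ← pow_mul, mul_comm]
    _ ≤ (m * 7⁻¹) ^ n * (128⁻¹ ^ 3) ^ (∑ i ∈ Finset.range n, (ruler i + 1)) * |x n - x' n| := by
        gcongr (m * 7⁻¹) ^ n * ?_ * ?_
        · exact pow_le_pow_of_le_one (by norm_num) (by norm_num) hexponent
    _ ≤ |x 0 - x' 0| := hx.pow_mul_abs_sub_le hp hx' hm hv hlt

variable {L : ℕ}

lemma exists_abs_birkhoffSum_le (hp : p ∈ simplexS) (hx : IsCodedOrbit p v x)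
    (hL : ∀ i, (v i).length ≤ L) {h : ℝ → ℝ} {M ε : ℝ} (hh : Continuous h) (hM : ∀ y, |h y| ≤ M)
    (hph : ∑ j, p j * h (theFixedPts j) = 0) (hε : 0 < ε) :
    ∃ C, ∀ i, |birkhoffSum theMap h (excursionWord p (v i) i).length (x i)| ≤
      ε * (excursionWord p (v i) i).length + C := by
  obtain ⟨C, hC⟩ := exists_abs_birkhoffSum_proportionalWord_le hp hh hM hph hε
  have hM₀ : 0 ≤ M := (abs_nonneg _).trans (hM 0)
  refine ⟨(L + 1) * M + C, fun i => ?_⟩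
  have hexcursion : excursionWord p (v i) i = (v i ++ [1]) ++ proportionalWord p (2 ^ ruler i) := by
    rw [excursionWord, List.append_assoc, List.singleton_append]
  have hcode : ((v i ++ [1]).length : ℝ) * M ≤ (L + 1) * M := by
    rw [List.length_append, List.length_singleton, Nat.cast_add_one]
    gcongr
    exact hL i
  rw [(hx i).2, hexcursion, birkhoffSum_wordMap_append mapsTo_branch_Ioo leftInvOn_theMap_branch h
    (hx.mem_Ioo (i + 1))]
  calc |birkhoffSum theMap h (v i ++ [1]).length _ +
          birkhoffSum theMap h (proportionalWord p (2 ^ ruler i)).length _|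
      ≤ (L + 1) * M + (ε * (proportionalWord p (2 ^ ruler i)).length + C) :=
        (abs_add_le _ _).trans (add_le_add ((abs_birkhoffSum_le hM _ _).trans hcode)
          (hC _ _ (hx.mem_Ioo (i + 1))))
    _ ≤ ε * ((v i ++ [1]) ++ proportionalWord p (2 ^ ruler i)).length + ((L + 1) * M + C) := by
        rw [List.length_append, Nat.cast_add]
        nlinarith [mul_nonneg hε.le (Nat.cast_nonneg (α := ℝ) (v i ++ [1]).length)]

lemma isLittleO_birkhoffSum (hp : p ∈ simplexS) (hx : IsCodedOrbit p v x)
    (hL : ∀ i, (v i).length ≤ L) {h : ℝ → ℝ} {M : ℝ} (hh : Continuous h) (hM : ∀ y, |h y| ≤ M)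
    (hph : ∑ j, p j * h (theFixedPts j) = 0) :
    (fun n => birkhoffSum theMap h n (x 0)) =o[atTop] fun n => (n : ℝ) :=
  isLittleO_birkhoffSum_of_blocks hM hx.iterate_theMap
    (fun _ hε => hx.exists_abs_birkhoffSum_le hp hL hh hM hph hε)
    (isLittleO_length_excursionWord hp hL) (isLittleO_sum_length_excursionWord hp v)

end IsCodedOrbit

end CodedPoints

/-! ### Basins of attraction -/

section Basin

/-- The basin of attraction of `ν` under `f`, inside the unit interval. -/
def basin (f : ℝ → ℝ) (ν : Measure ℝ) : Set ℝ :=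
  {x | x ∈ Icc (0 : ℝ) 1 ∧ WeakTendsto (fun n => empMeasure f (n + 1) x) ν}

variable {p : Fin 3 → ℝ}

lemma integral_empMeasure (f g : ℝ → ℝ) (n : ℕ) (x : ℝ) :
    ∫ y, g y ∂empMeasure f n x = (n : ℝ)⁻¹ * birkhoffSum f g n x := by
  rw [empMeasure, integral_smul_measure, integral_finsetSum_measure fun _ _ => integrable_dirac
    (by simp)]
  simp [birkhoffSum]

lemma integral_nuMeasure (hp : p ∈ simplexS) (g : ℝ → ℝ) :
    ∫ y, g y ∂nuMeasure p = ∑ j, p j * g (theFixedPts j) := by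
  rw [nuMeasure, integral_finsetSum_measure fun j _ =>
    (integrable_dirac (by simp)).smul_measure ENNReal.ofReal_ne_top]
  simp [integral_smul_measure, ENNReal.toReal_ofReal (hp.1 _).1]

lemma weakTendsto_empMeasure {f : ℝ → ℝ} {x : ℝ} {ν : Measure ℝ}
    (h : ∀ g : BoundedContinuousFunction ℝ ℝ,
      (fun n => birkhoffSum f (fun y => g y - ∫ z, g z ∂ν) n x) =o[atTop] fun n => (n : ℝ)) :
    WeakTendsto (fun n => empMeasure f (n + 1) x) ν := fun g => by
  have hlim := ((h g).tendsto_div_nhds_zero.comp (tendsto_add_atTop_nat 1)).add_const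
    (∫ z, g z ∂ν)
  rw [zero_add] at hlim
  refine hlim.congr fun n => ?_
  have hn : ((n + 1 : ℕ) : ℝ) ≠ 0 := by positivity
  rw [integral_empMeasure, Function.comp_apply, birkhoffSum, Finset.sum_sub_distrib,
    Finset.sum_const, Finset.card_range, nsmul_eq_mul, sub_div, mul_div_cancel_left₀ _ hn,
    sub_add_cancel, div_eq_inv_mul, birkhoffSum]

lemma IsCodedOrbit.mem_basin {v : ℕ → List (Fin 3)} {x : ℕ → ℝ} {L : ℕ} (hp : p ∈ simplexS)
    (hx : IsCodedOrbit p v x) (hL : ∀ i, (v i).length ≤ L) :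
    x 0 ∈ basin theMap (nuMeasure p) := by
  refine ⟨(hx 0).1, weakTendsto_empMeasure fun g => ?_⟩
  rw [integral_nuMeasure hp]
  set c := ∑ j, p j * g (theFixedPts j) with hc
  refine hx.isLittleO_birkhoffSum hp hL (M := ‖g‖ + |c|) (g.continuous.sub continuous_const)
    (fun y => (abs_sub _ _).trans (add_le_add_left (g.norm_coe_le_norm y) _)) ?_
  simp only [mul_sub, Finset.sum_sub_distrib, ← Finset.sum_mul, hp.2, one_mul, ← hc, sub_self]

theorem le_dimH_basin_nuMeasure (hp : p ∈ simplexS) {s : NNReal} (hs : s ∈ Ioo 0 1) :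
    (s : ℝ≥0∞) ≤ dimH (basin theMap (nuMeasure p)) := by
  obtain ⟨W, m, ⟨hm₀, hm₁⟩, hW, hslopes, hcard⟩ := exists_code_le_card_mul_rpow (s := s)
    (A := ((7⁻¹ * (128⁻¹ ^ 3) ^ 2 : ℝ) ^ (s : ℝ))⁻¹) hs (by positivity)
  let word (ω : ℕ → Fin W.card) (i : ℕ) : List (Fin 3) := W.equivFin.symm (ω i)
  have hmem (ω : ℕ → Fin W.card) (i : ℕ) : word ω i ∈ W := Subtype.coe_prop _
  choose x hx using fun ω => exists_isCodedOrbit p (word ω)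
  have hbasin : range (fun ω => x ω 0) ⊆ basin theMap (nuMeasure p) := by
    rintro _ ⟨ω, rfl⟩
    exact (hx ω).mem_basin hp fun i => Finset.le_sup (f := List.length) (hmem ω i)
  refine le_trans ?_ (dimH_mono hbasin)
  refine le_dimH_range_of_le_dist (c := m * (1 / 3)) (ρ := m * (7⁻¹ * (128⁻¹ ^ 3) ^ 2)) hs.1
    (by positivity) ⟨by positivity, mul_lt_one_of_nonneg_of_lt_one_right hm₁ (by positivity)
      (by norm_num)⟩ ?_
    fun ω ω' hne => ?_
  · rwa [Real.mul_rpow hm₀.le (by positivity), ← mul_assoc, ← inv_le_iff_one_le_mul₀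
      (by positivity)]
  · have hword : word ω (PiNat.firstDiff ω ω') ≠ word ω' (PiNat.firstDiff ω ω') := fun h =>
      PiNat.apply_firstDiff_ne hne (W.equivFin.symm.injective (Subtype.ext h))
    exact (hx ω).mul_pow_le_abs_sub hp (hx ω') hm₀.le (fun i => hslopes _ (hmem ω i))
      (fun i => hslopes _ (hmem ω' i))
      (fun i hi => congrArg (fun k => (W.equivFin.symm k : List (Fin 3)))
        (PiNat.apply_eq_of_lt_firstDiff hi))
      (hW (hmem ω _) (hmem ω' _) hword) (hW (hmem ω' _) (hmem ω _) hword.symm)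

end Basin

/-- For every `p̄ ∈ S`, the basin of attraction
`𝒢(ν_p̄) = {x ∈ [0,1] : e_n(x) → ν_p̄ weakly*}` has Hausdorff dimension `1`. -/
theorem stmt0 (p : Fin 3 → ℝ) (hp : p ∈ simplexS) :
    dimH {x : ℝ | x ∈ Set.Icc (0:ℝ) 1 ∧
      WeakTendsto (fun n => empMeasure theMap (n + 1) x) (nuMeasure p)} = 1 := by
  refine le_antisymm ((dimH_mono (subset_univ _)).trans_eq Real.dimH_univ)
    (ENNReal.le_of_forall_nnreal_lt fun s hs => ?_)
  obtain rfl | hs₀ := eq_zero_or_pos s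
  · exact zero_le
  · exact le_dimH_basin_nuMeasure hp ⟨hs₀, mod_cast hs⟩
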